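/- arXiv:2506.24058 — 2 statements merged into one kernel-verified Lean document; each statement's English description precedes it below -/
import Mathlib

section
/- Let n ≥ 1. Assume g : [0,∞) → ℝ is C² with g(t) > 0 and g'(t) > 0 for all t, ∫₀^∞ 1/g(τ) dτ < ∞, and, with G(t) = ½∫₀ᵗ g(τ) dτ, there are constants C₁, C₂ > 0 with |g'(t)| ≤ C₁ g(t)²/G(t) and |g''(t)| ≤ C₂ g(t)³/G(t)² for all t > 0. Assume b : [0,∞) → ℝ is C² with b(t) > 0, either b'(t) ≥ 0 for all t or b'(t) < 0 for all t, lim_{t→∞} t·b(t) = ∞, |b'(t)| ≤ C b(t)/(1+t) and |b''(t)| ≤ C b(t)/(1+t)² for all t (some C > 0), and |b'(t)| ≤ a·b(t)² for all t with a fixed constant a < 1. Write ⟨ξ⟩ = (1+|ξ|²)^{1/2}. Then for every real σ ≥ 0 there is C' > 0 such that every Fourier solution û with data û₀, û₁ satisfies for all t ≥ 0 (whenever the data integrals are finite): (∫ |ξ|^{2σ}|û(t,ξ)|² dξ)^{1/2} ≤ C'[ (∫ |ξ|^{2σ}|û₀|² dξ)^{1/2} + (∫ |ξ|^{2σ}⟨ξ⟩^{−4}|û₁|²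 dξ)^{1/2} ]. Moreover, if b'(t) ≥ 0 for all t then (∫ |ξ|^{2σ}|∂ₜû(t,ξ)|² dξ)^{1/2} ≤ C' g(t)[ (∫ |ξ|^{2(σ+2)}|û₀|² dξ)^{1/2} + (∫ |ξ|^{2(σ+2)}⟨ξ⟩^{−4}|û₁|² dξ)^{1/2} ] + C' b(t)[ (∫ |ξ|^{2σ}|û₀|² dξ)^{1/2} + (∫ |ξ|^{2σ}⟨ξ⟩^{−4}|û₁|² dξ)^{1/2} ]; if b'(t) < 0 for all t then (∫ |ξ|^{2σ}|∂ₜû(t,ξ)|² dξ)^{1/2} ≤ C' g(t)[ (∫ |ξ|^{2(σ+2)}|û₀|² dξ)^{1/2} + (∫ |ξ|^{2σ}|û₁|² dξ)^{1/2} ] + C' b(t)[ (∫ |ξ|^{2σ}|û₀|² dξ)^{1/2} + (∫ |ξ|^{2(σ−2)}|û₁|² dξ)^{1/2} ]. -/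
open MeasureTheory Filter

/-!
In a mode of frequency `|ξ|` the damping is `B = b + g |ξ|²`, and `|b'| ≤ a b²`, `g' ≥ 0` give
`B' ≥ -a B²`. For the functional `N = |û| + |û'| / ((1 - a) B)` this lower bound makes the decay
of the second summand absorb the growth of the first, leaving
`N' ≤ (1 - a)⁻¹ (|ξ|² / B) N ≤ (1 - a)⁻¹ g⁻¹ N`. As `g⁻¹` is integrable, Grönwall's inequality
bounds `N(t)` by `N(0)` uniformly in `ξ`, while `B(0) ≳ ⟨ξ⟩²` gives `N(0) ≲ |û₀| + ⟨ξ⟩⁻² |û₁|`.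
Hence `|û|` and `|û'| / B` are bounded by the latter, and all estimates follow by integrating
squares.
-/

open Set Topology

section NormSlope

variable {E : Type*} [NormedAddCommGroup E] [NormedSpace ℝ E]

theorem slope_norm_le (f : ℝ → E) {c x z : ℝ} (hxz : x < z) (hc : c * (z - x) ≤ 1) :
    slope (fun s => ‖f s‖) x z ≤ ‖slope f x z + c • f x‖ - c * ‖f x‖ := by
  have hd : 0 < z - x := sub_pos.2 hxz
  have hsplit : f z = (1 - c * (z - x)) • f x + (z - x) • (slope f x z + c • f x) := by
    rw [smul_add, sub_smul_slope, vsub_eq_sub]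
    module
  have hnorm : ‖f z‖ ≤ (1 - c * (z - x)) * ‖f x‖ + (z - x) * ‖slope f x z + c • f x‖ :=
    calc ‖f z‖ ≤ ‖(1 - c * (z - x)) • f x‖ + ‖(z - x) • (slope f x z + c • f x)‖ :=
          (congrArg norm hsplit).trans_le (norm_add_le _ _)
      _ = _ := by
          rw [norm_smul_of_nonneg (sub_nonneg.2 hc), norm_smul_of_nonneg hd.le]
  rw [slope_def_field, div_le_iff₀ hd]
  linarith

theorem eventually_slope_norm_lt {f : ℝ → E} {f' : E} {x : ℝ}
    (hf : HasDerivWithinAt f f' (Ioi x) x) {c r : ℝ}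
    (hr : ‖f' + c • f x‖ - c * ‖f x‖ < r) :
    ∀ᶠ z in 𝓝[>] x, slope (fun s => ‖f s‖) x z < r := by
  have hslope : Tendsto (slope f x) (𝓝[>] x) (𝓝 f') :=
    (hasDerivWithinAt_iff_tendsto_slope' self_notMem_Ioi).1 hf
  have hstep : ∀ᶠ z in 𝓝[>] x, c * (z - x) < 1 := by
    have : ContinuousAt (fun z => c * (z - x)) x := by fun_prop
    exact nhdsWithin_le_nhds (this.eventually_lt_const (by simp))
  filter_upwards [((hslope.add_const _).norm.sub_const _).eventually_lt_const hr, hstep,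
    self_mem_nhdsWithin] with z hz hcz hxz
  exact (slope_norm_le f hxz hcz.le).trans_lt hz

theorem eventually_slope_norm_add_norm_lt {F : Type*} [NormedAddCommGroup F] [NormedSpace ℝ F]
    {f : ℝ → E} {f' : E} {h : ℝ → F} {h' : F} {x : ℝ}
    (hf : HasDerivWithinAt f f' (Ioi x) x) (hh : HasDerivWithinAt h h' (Ioi x) x) {c d r : ℝ}
    (hr : ‖f' + c • f x‖ - c * ‖f x‖ + (‖h' + d • h x‖ - d * ‖h x‖) < r) :
    ∀ᶠ z in 𝓝[>] x, slope (fun s => ‖f s‖ + ‖h s‖) x z < r := by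
  obtain ⟨r₁, hr₁, hr₂⟩ := exists_between (lt_sub_iff_add_lt.2 hr)
  filter_upwards [eventually_slope_norm_lt hf hr₁,
    eventually_slope_norm_lt hh (lt_sub_comm.1 hr₂)] with z hz₁ hz₂
  calc slope (fun s => ‖f s‖ + ‖h s‖) x z
      = slope (fun s => ‖f s‖) x z + slope (fun s => ‖h s‖) x z := by
        simp only [slope_def_field]; ring
    _ < r := by linarith

end NormSlope

section Gronwall

theorem hasDerivWithinAt_integral_Icc {κ : ℝ → ℝ} {a b x : ℝ}
    (hκ : ContinuousOn κ (Icc a b)) (hx : x ∈ Icc a b) :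
    HasDerivWithinAt (fun s => ∫ τ in a..s, κ τ) (κ x) (Icc a b) x := by
  have : Fact (x ∈ Icc a b) := ⟨hx⟩
  exact intervalIntegral.integral_hasDerivWithinAt_right
    ((hκ.mono (Icc_subset_Icc_right hx.2)).intervalIntegrable_of_Icc hx.1)
    (hκ.stronglyMeasurableAtFilter_nhdsWithin measurableSet_Icc x) (hκ x hx)

theorem le_mul_exp_integral_of_slope_right_le {N κ : ℝ → ℝ} {a b : ℝ} (hab : a ≤ b)
    (hκ : ContinuousOn κ (Icc a b)) (hN : ContinuousOn N (Icc a b))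
    (hslope : ∀ x ∈ Ico a b, ∀ r, κ x * N x < r → ∃ᶠ z in 𝓝[>] x, slope N x z < r) :
    N b ≤ N a * Real.exp (∫ τ in a..b, κ τ) := by
  -- The summand `ε * (x - a)` makes the fence strict; it is removed at the end by letting `ε → 0`.
  let fence (ε x : ℝ) : ℝ := (N a + ε * (x - a)) * Real.exp (∫ τ in a..x, κ τ)
  have hfence (ε : ℝ) {x : ℝ} (hx : x ∈ Icc a b) : HasDerivWithinAt (fence ε)
      (ε * Real.exp (∫ τ in a..x, κ τ) + κ x * fence ε x) (Icc a b) x := by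
    have hlin : HasDerivWithinAt (fun s => N a + ε * (s - a)) (ε * 1) (Icc a b) x :=
      (((hasDerivWithinAt_id x _).sub_const a).const_mul ε).const_add (N a)
    refine (hlin.mul (hasDerivWithinAt_integral_Icc hκ hx).exp).congr_deriv ?_
    simp only [fence]
    ring
  have hfence_bound (ε : ℝ) (hε : 0 < ε) : N b ≤ fence ε b := by
    refine image_le_of_liminf_slope_right_lt_deriv_boundary' hN hslope (by simp [fence])
      (fun x hx => (hfence ε hx).continuousWithinAt)
      (fun x hx => (hfence ε (Ico_subset_Icc_self hx)).mono_of_mem_nhdsWithin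
        (Icc_mem_nhdsGE_of_mem hx)) (fun x _ hx => ?_) (right_mem_Icc.2 hab)
    rw [hx]
    exact lt_add_of_pos_left _ (mul_pos hε (Real.exp_pos _))
  have hlim : Tendsto (fun ε => fence ε b) (𝓝[>] 0) (𝓝 (fence 0 b)) :=
    (Continuous.tendsto (by fun_prop) 0).mono_left nhdsWithin_le_nhds
  simpa [fence] using ge_of_tendsto hlim (eventually_mem_nhdsWithin.mono hfence_bound)

end Gronwall

/-- `u` moves with velocity `v` and solves `u'' + B u' + k u = 0` on `[0, ∞)`, in first-order form;
derivatives at `0` are one-sided. -/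
structure IsDampedOscillation {E : Type*} [NormedAddCommGroup E] [NormedSpace ℝ E]
    (B k : ℝ → ℝ) (u v : ℝ → E) : Prop where
  hasDerivWithinAt_position : ∀ t, 0 ≤ t → HasDerivWithinAt u (v t) (Ici 0) t
  hasDerivWithinAt_velocity :
    ∀ t, 0 ≤ t → HasDerivWithinAt v (-(k t • u t) - B t • v t) (Ici 0) t

/-- The velocity in units of the damping, the factor `1 - a` being chosen so that in
`lyapunov` the growth of `‖u‖` is absorbed by the decay of this second component. -/
noncomputable def rescaledVelocity {E : Type*} [SMul ℝ E] (a : ℝ) (B : ℝ → ℝ) (v : ℝ → E)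
    (t : ℝ) : E :=
  ((1 - a) * B t)⁻¹ • v t

/-- The Lyapunov functional of a damped oscillation whose damping satisfies `-a * B ^ 2 ≤ B'`. -/
noncomputable def lyapunov {E : Type*} [NormedAddCommGroup E] [NormedSpace ℝ E] (a : ℝ)
    (B : ℝ → ℝ) (u v : ℝ → E) (t : ℝ) : ℝ :=
  ‖u t‖ + ‖rescaledVelocity a B v t‖

theorem isDampedOscillation_of_contDiff {B k : ℝ → ℝ} {u : ℝ → ℂ} (hu : ContDiff ℝ 2 u)
    (hode : ∀ t, 0 ≤ t →
      deriv (deriv u) t + (k t : ℂ) * u t + (B t : ℂ) * deriv u t = 0) :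
    IsDampedOscillation B k u (deriv u) where
  hasDerivWithinAt_position t _ :=
    (hu.differentiable two_ne_zero t).hasDerivAt.hasDerivWithinAt
  hasDerivWithinAt_velocity t ht := by
    have hdd := (hu.differentiable_deriv_two t).hasDerivAt
    refine (hdd.congr_deriv ?_).hasDerivWithinAt
    rw [Complex.real_smul, Complex.real_smul]
    linear_combination hode t ht

section Lyapunov

variable {E : Type*} [NormedAddCommGroup E] [NormedSpace ℝ E]
  {B : ℝ → ℝ} {u v : ℝ → E} {a c m t : ℝ}

theorem norm_rescaledVelocity (ha : a < 1) (hB : 0 < B t) :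
    ‖rescaledVelocity a B v t‖ = ((1 - a) * B t)⁻¹ * ‖v t‖ :=
  norm_smul_of_nonneg (inv_nonneg.2 (mul_pos (sub_pos.2 ha) hB).le) _

theorem norm_velocity_eq (ha : a < 1) (hB : 0 < B t) :
    ‖v t‖ = (1 - a) * B t * ‖rescaledVelocity a B v t‖ := by
  have hℓ : (1 - a) * B t ≠ 0 := (mul_pos (sub_pos.2 ha) hB).ne'
  rw [norm_rescaledVelocity ha hB, mul_inv_cancel_left₀ hℓ]

theorem norm_le_lyapunov : ‖u t‖ ≤ lyapunov a B u v t :=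
  le_add_of_nonneg_right (norm_nonneg _)

theorem norm_velocity_le_mul_lyapunov (ha₀ : 0 ≤ a) (ha : a < 1) (hB : 0 < B t) :
    ‖v t‖ ≤ B t * lyapunov a B u v t := by
  calc ‖v t‖ = (1 - a) * B t * ‖rescaledVelocity a B v t‖ := norm_velocity_eq ha hB
    _ ≤ B t * ‖rescaledVelocity a B v t‖ := by
        gcongr
        exact mul_le_of_le_one_left hB.le (by linarith)
    _ ≤ B t * lyapunov a B u v t := by
        gcongr
        exact le_add_of_nonneg_left (norm_nonneg _)

theorem lyapunov_le_max_mul (ha : a < 1) (hc : 0 < c) (hm : 0 < m) (hB : c * m ≤ B t) :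
    lyapunov a B u v t ≤ max 1 ((1 - a) * c)⁻¹ * (‖u t‖ + m⁻¹ * ‖v t‖) := by
  have ha' : 0 < 1 - a := sub_pos.2 ha
  have hvel : ‖rescaledVelocity a B v t‖ ≤ ((1 - a) * c)⁻¹ * (m⁻¹ * ‖v t‖) :=
    calc ‖rescaledVelocity a B v t‖ = ((1 - a) * B t)⁻¹ * ‖v t‖ :=
          norm_rescaledVelocity ha ((mul_pos hc hm).trans_le hB)
      _ ≤ ((1 - a) * (c * m))⁻¹ * ‖v t‖ := by gcongr
      _ = ((1 - a) * c)⁻¹ * (m⁻¹ * ‖v t‖) := by field_simp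
  rw [lyapunov, mul_add]
  gcongr
  · exact le_mul_of_one_le_left (norm_nonneg _) (le_max_left _ _)
  · refine hvel.trans ?_
    gcongr
    exact le_max_right _ _

end Lyapunov

namespace IsDampedOscillation

variable {E : Type*} [NormedAddCommGroup E] [NormedSpace ℝ E]
  {B B' k κ : ℝ → ℝ} {u v : ℝ → E} {a t : ℝ}

theorem hasDerivWithinAt_rescaledVelocity (hu : IsDampedOscillation B k u v) (ha : a < 1)
    (ht : 0 ≤ t) (hB : HasDerivWithinAt B (B' t) (Ici 0) t) (hBt : 0 < B t) :
    HasDerivWithinAt (rescaledVelocity a B v)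
      (-((k t / ((1 - a) * B t)) • u t) - (B t + B' t / B t) • rescaledVelocity a B v t)
      (Ici 0) t := by
  have ha' : 1 - a ≠ 0 := (sub_pos.2 ha).ne'
  refine (((hB.const_mul (1 - a)).inv (mul_ne_zero ha' hBt.ne')).smul
    (hu.hasDerivWithinAt_velocity t ht)).congr_deriv ?_
  simp only [rescaledVelocity, Pi.inv_apply]
  match_scalars <;> field_simp
  ring

theorem eventually_slope_lyapunov_lt (hu : IsDampedOscillation B k u v) (ha : a < 1)
    (ht : 0 ≤ t) (hB : HasDerivWithinAt B (B' t) (Ici 0) t) (hBt : 0 < B t)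
    (hB' : -(a * B t ^ 2) ≤ B' t) (hk : |k t| ≤ κ t * B t) {r : ℝ}
    (hr : (1 - a)⁻¹ * κ t * lyapunov a B u v t < r) :
    ∀ᶠ z in 𝓝[>] t, slope (lyapunov a B u v) t z < r := by
  have ha' : 0 < 1 - a := sub_pos.2 ha
  have hκ : 0 ≤ κ t := nonneg_of_mul_nonneg_left ((abs_nonneg _).trans hk) hBt
  have hsub : Ioi t ⊆ Ici 0 := fun s hs => ht.trans hs.le
  refine eventually_slope_norm_add_norm_lt (c := 0) (d := B t + B' t / B t)
    ((hu.hasDerivWithinAt_position t ht).mono hsub)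
    ((hu.hasDerivWithinAt_rescaledVelocity ha ht hB hBt).mono hsub) (lt_of_le_of_lt ?_ hr)
  have hdamp : (1 - a) * B t ≤ B t + B' t / B t := by
    have : -(a * B t) ≤ B' t / B t := (le_div_iff₀ hBt).2 (by linarith)
    linarith
  have hforce : |k t / ((1 - a) * B t)| ≤ (1 - a)⁻¹ * κ t := by
    rw [abs_div, abs_of_pos (mul_pos ha' hBt), div_le_iff₀ (mul_pos ha' hBt)]
    field_simp
    exact hk
  rw [zero_smul, add_zero, zero_mul, sub_zero, sub_add_cancel, norm_neg, norm_smul,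
    Real.norm_eq_abs, norm_velocity_eq ha hBt]
  calc (1 - a) * B t * ‖rescaledVelocity a B v t‖ + (|k t / ((1 - a) * B t)| * ‖u t‖ -
        (B t + B' t / B t) * ‖rescaledVelocity a B v t‖)
      ≤ (1 - a)⁻¹ * κ t * ‖u t‖ := by
        have := mul_le_mul_of_nonneg_right hdamp (norm_nonneg (rescaledVelocity a B v t))
        have := mul_le_mul_of_nonneg_right hforce (norm_nonneg (u t))
        linarith
    _ ≤ (1 - a)⁻¹ * κ t * lyapunov a B u v t := by
        gcongr
        exact norm_le_lyapunov

theorem lyapunov_le (hu : IsDampedOscillation B k u v) (ha : a < 1)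
    (hB : ∀ s, 0 ≤ s → HasDerivWithinAt B (B' s) (Ici 0) s) (hB_pos : ∀ s, 0 ≤ s → 0 < B s)
    (hB' : ∀ s, 0 ≤ s → -(a * B s ^ 2) ≤ B' s) (hκ : ContinuousOn κ (Ici 0))
    (hk : ∀ s, 0 ≤ s → |k s| ≤ κ s * B s) (ht : 0 ≤ t) :
    lyapunov a B u v t ≤ lyapunov a B u v 0 * Real.exp ((1 - a)⁻¹ * ∫ s in 0..t, κ s) := by
  have hcont : ContinuousOn (lyapunov a B u v) (Ici 0) := fun s hs =>
    (hu.hasDerivWithinAt_position s hs).continuousWithinAt.norm.add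
      (hu.hasDerivWithinAt_rescaledVelocity ha hs (hB s hs) (hB_pos s hs)).continuousWithinAt.norm
  rw [← intervalIntegral.integral_const_mul]
  refine le_mul_exp_integral_of_slope_right_le ht
    ((hκ.const_mul _).mono Icc_subset_Ici_self) (hcont.mono Icc_subset_Ici_self) ?_
  intro s hs r hr
  exact (hu.eventually_slope_lyapunov_lt ha hs.1 (hB s hs.1) (hB_pos s hs.1) (hB' s hs.1)
    (hk s hs.1) hr).frequently

end IsDampedOscillation

/-- The damping `b + g |ξ|²` of the Fourier mode of frequency `|ξ| = r`. -/
def viscousDamping (b g : ℝ → ℝ) (r t : ℝ) : ℝ :=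
  b t + g t * r ^ 2

theorem min_mul_le_viscousDamping (b g : ℝ → ℝ) (r t : ℝ) :
    min (b t) (g t) * (1 + r ^ 2) ≤ viscousDamping b g r t := by
  rw [mul_one_add, viscousDamping]
  gcongr
  exacts [min_le_left _ _, min_le_right _ _]

/-- Friction `b` and viscoelastic coefficient `g` on `[0, ∞)`, with derivatives `b'` and `g'`
(one-sided at `0`). The lower bound on `b'` says that `1 / b` has slope at most `a < 1`, so that
the friction is effective; `g` is nondecreasing with integrable reciprocal. -/
structure IsEffectiveIncreasing (a : ℝ) (b b' g g' : ℝ → ℝ) : Prop where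
  nonneg_const : 0 ≤ a
  const_lt_one : a < 1
  friction_pos : ∀ t, 0 ≤ t → 0 < b t
  hasDerivWithinAt_friction : ∀ t, 0 ≤ t → HasDerivWithinAt b (b' t) (Ici 0) t
  neg_mul_sq_le_friction_deriv : ∀ t, 0 ≤ t → -(a * b t ^ 2) ≤ b' t
  viscosity_pos : ∀ t, 0 ≤ t → 0 < g t
  hasDerivWithinAt_viscosity : ∀ t, 0 ≤ t → HasDerivWithinAt g (g' t) (Ici 0) t
  viscosity_deriv_nonneg : ∀ t, 0 ≤ t → 0 ≤ g' t
  integrableOn_inv_viscosity : IntegrableOn (fun t => (g t)⁻¹) (Ici 0)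

theorem isEffectiveIncreasing_of_abs_deriv_le {a : ℝ} {b g : ℝ → ℝ} (ha : a < 1)
    (hb : Differentiable ℝ b) (hb_pos : ∀ t, 0 ≤ t → 0 < b t)
    (hb' : ∀ t, 0 ≤ t → |deriv b t| ≤ a * b t ^ 2)
    (hg : Differentiable ℝ g) (hg_pos : ∀ t, 0 ≤ t → 0 < g t)
    (hg' : ∀ t, 0 ≤ t → 0 ≤ deriv g t) (hg_int : IntegrableOn (fun t => (g t)⁻¹) (Ici 0)) :
    IsEffectiveIncreasing a b (deriv b) g (deriv g) where
  nonneg_const :=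
    nonneg_of_mul_nonneg_left ((abs_nonneg _).trans (hb' 0 le_rfl)) (pow_pos (hb_pos 0 le_rfl) 2)
  const_lt_one := ha
  friction_pos := hb_pos
  hasDerivWithinAt_friction t _ := (hb t).hasDerivAt.hasDerivWithinAt
  neg_mul_sq_le_friction_deriv t ht := (abs_le.1 (hb' t ht)).1
  viscosity_pos := hg_pos
  hasDerivWithinAt_viscosity t _ := (hg t).hasDerivAt.hasDerivWithinAt
  viscosity_deriv_nonneg := hg'
  integrableOn_inv_viscosity := hg_int

namespace IsEffectiveIncreasing

variable {a t : ℝ} {b b' g g' : ℝ → ℝ}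

theorem viscousDamping_pos (h : IsEffectiveIncreasing a b b' g g') (r : ℝ) (ht : 0 ≤ t) :
    0 < viscousDamping b g r t :=
  add_pos_of_pos_of_nonneg (h.friction_pos t ht)
    (mul_nonneg (h.viscosity_pos t ht).le (sq_nonneg r))

theorem hasDerivWithinAt_viscousDamping (h : IsEffectiveIncreasing a b b' g g') (r : ℝ)
    (ht : 0 ≤ t) :
    HasDerivWithinAt (viscousDamping b g r) (viscousDamping b' g' r t) (Ici 0) t :=
  (h.hasDerivWithinAt_friction t ht).add ((h.hasDerivWithinAt_viscosity t ht).mul_const _)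

theorem neg_mul_sq_le_viscousDamping_deriv (h : IsEffectiveIncreasing a b b' g g') (r : ℝ)
    (ht : 0 ≤ t) :
    -(a * viscousDamping b g r t ^ 2) ≤ viscousDamping b' g' r t := by
  have hb := (h.friction_pos t ht).le
  have hmono : b t ≤ viscousDamping b g r t :=
    le_add_of_nonneg_right (mul_nonneg (h.viscosity_pos t ht).le (sq_nonneg r))
  calc -(a * viscousDamping b g r t ^ 2) ≤ -(a * b t ^ 2) := by
        have := h.nonneg_const
        gcongr
    _ ≤ b' t := h.neg_mul_sq_le_friction_deriv t ht
    _ ≤ viscousDamping b' g' r t :=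
        le_add_of_nonneg_right (mul_nonneg (h.viscosity_deriv_nonneg t ht) (sq_nonneg r))

theorem sq_le_inv_mul_viscousDamping (h : IsEffectiveIncreasing a b b' g g') (r : ℝ)
    (ht : 0 ≤ t) : r ^ 2 ≤ (g t)⁻¹ * viscousDamping b g r t := by
  have hb := h.friction_pos t ht
  have hg := h.viscosity_pos t ht
  rw [viscousDamping, le_inv_mul_iff₀ hg]
  exact le_add_of_nonneg_left hb.le

theorem continuousOn_inv_viscosity (h : IsEffectiveIncreasing a b b' g g') :
    ContinuousOn (fun t => (g t)⁻¹) (Ici 0) := fun t ht =>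
  (h.hasDerivWithinAt_viscosity t ht).continuousWithinAt.inv₀ (h.viscosity_pos t ht).ne'

theorem intervalIntegral_inv_le (h : IsEffectiveIncreasing a b b' g g') (ht : 0 ≤ t) :
    ∫ s in 0..t, (g s)⁻¹ ≤ ∫ s in Ici 0, (g s)⁻¹ := by
  rw [intervalIntegral.integral_of_le ht]
  exact setIntegral_mono_set h.integrableOn_inv_viscosity
    ((ae_restrict_mem measurableSet_Ici).mono fun s hs => (inv_pos.2 (h.viscosity_pos s hs)).le)
    (Ioc_subset_Icc_self.trans Icc_subset_Ici_self).eventuallyLE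

variable {E : Type*} [NormedAddCommGroup E] [NormedSpace ℝ E]

theorem lyapunov_le (h : IsEffectiveIncreasing a b b' g g') {r : ℝ} {u v : ℝ → E}
    (hu : IsDampedOscillation (viscousDamping b g r) (fun _ => r ^ 2) u v) (ht : 0 ≤ t) :
    lyapunov a (viscousDamping b g r) u v t ≤
      lyapunov a (viscousDamping b g r) u v 0 *
        Real.exp ((1 - a)⁻¹ * ∫ s in Ici 0, (g s)⁻¹) := by
  refine (hu.lyapunov_le h.const_lt_one (fun s hs => h.hasDerivWithinAt_viscousDamping r hs)
    (fun s hs => h.viscousDamping_pos r hs)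
    (fun s hs => h.neg_mul_sq_le_viscousDamping_deriv r hs) h.continuousOn_inv_viscosity
    (fun s hs => (abs_sq r).trans_le (h.sq_le_inv_mul_viscousDamping r hs)) ht).trans ?_
  have ha : 0 ≤ 1 - a := sub_nonneg.2 h.const_lt_one.le
  gcongr
  · exact (norm_nonneg (u 0)).trans norm_le_lyapunov
  · exact h.intervalIntegral_inv_le ht

variable (E) in
theorem exists_mode_bound (h : IsEffectiveIncreasing a b b' g g') :
    ∃ A : ℝ, 0 < A ∧ ∀ (r : ℝ) (u v : ℝ → E),
      IsDampedOscillation (viscousDamping b g r) (fun _ => r ^ 2) u v → ∀ t, 0 ≤ t →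
        ‖u t‖ ≤ A * (‖u 0‖ + (1 + r ^ 2)⁻¹ * ‖v 0‖) ∧
        ‖v t‖ ≤ viscousDamping b g r t * (A * (‖u 0‖ + (1 + r ^ 2)⁻¹ * ‖v 0‖)) := by
  let c := min (b 0) (g 0)
  have hc : 0 < c := lt_min (h.friction_pos 0 le_rfl) (h.viscosity_pos 0 le_rfl)
  refine ⟨max 1 ((1 - a) * c)⁻¹ * Real.exp ((1 - a)⁻¹ * ∫ s in Ici 0, (g s)⁻¹), by positivity,
    fun r u v hu t ht => ?_⟩
  have hlyap : lyapunov a (viscousDamping b g r) u v t ≤ max 1 ((1 - a) * c)⁻¹ *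
      Real.exp ((1 - a)⁻¹ * ∫ s in Ici 0, (g s)⁻¹) * (‖u 0‖ + (1 + r ^ 2)⁻¹ * ‖v 0‖) := by
    rw [mul_right_comm]
    refine (h.lyapunov_le hu ht).trans ?_
    gcongr
    exact lyapunov_le_max_mul h.const_lt_one hc (by positivity) (min_mul_le_viscousDamping b g r 0)
  have hB := h.viscousDamping_pos r ht
  exact ⟨norm_le_lyapunov.trans hlyap,
    (norm_velocity_le_mul_lyapunov h.nonneg_const h.const_lt_one hB).trans
      (mul_le_mul_of_nonneg_left hlyap hB.le)⟩

end IsEffectiveIncreasing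

section WeightedL2

variable {X F : Type*} [NormedAddCommGroup F]

/-- The density `w |f|²` of the weighted `L²` norm. -/
def weightedSq (w : X → ℝ) (f : X → F) (x : X) : ℝ :=
  w x * ‖f x‖ ^ 2

variable [MeasurableSpace X] {μ : Measure X}

/-- The `L²` norm with weight `w`; it is `0` when `weightedSq w f` is not integrable. -/
noncomputable def weightedL2Norm (μ : Measure X) (w : X → ℝ) (f : X → F) : ℝ :=
  √(∫ x, weightedSq w f x ∂μ)

/-- `f` lies in the `L²` space with weight `w`, with norm at most `M`. The first clause excludes
the junk value of `weightedL2Norm`. -/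
def WeightedL2NormLE (μ : Measure X) (w : X → ℝ) (f : X → F) (M : ℝ) : Prop :=
  Integrable (weightedSq w f) μ ∧ weightedL2Norm μ w f ≤ M

theorem sqrt_integral_le_add {φ φ₁ φ₂ : X → ℝ} {c₁ c₂ : ℝ} (hc₁ : 0 ≤ c₁) (hc₂ : 0 ≤ c₂)
    (hφ : 0 ≤ᵐ[μ] φ) (hφ₁ : 0 ≤ᵐ[μ] φ₁) (hφ₂ : 0 ≤ᵐ[μ] φ₂)
    (hint₁ : Integrable φ₁ μ) (hint₂ : Integrable φ₂ μ)
    (hle : ∀ᵐ x ∂μ, φ x ≤ c₁ ^ 2 * φ₁ x + c₂ ^ 2 * φ₂ x) :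
    √(∫ x, φ x ∂μ) ≤ c₁ * √(∫ x, φ₁ x ∂μ) + c₂ * √(∫ x, φ₂ x ∂μ) := by
  refine Real.sqrt_le_iff.2 ⟨by positivity, ?_⟩
  calc ∫ x, φ x ∂μ ≤ ∫ x, (c₁ ^ 2 * φ₁ x + c₂ ^ 2 * φ₂ x) ∂μ :=
        integral_mono_of_nonneg hφ ((hint₁.const_mul _).add (hint₂.const_mul _)) hle
    _ = (c₁ * √(∫ x, φ₁ x ∂μ)) ^ 2 + (c₂ * √(∫ x, φ₂ x ∂μ)) ^ 2 := by
        rw [integral_add (hint₁.const_mul _) (hint₂.const_mul _), integral_const_mul,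
          integral_const_mul, mul_pow, mul_pow, Real.sq_sqrt (integral_nonneg_of_ae hφ₁),
          Real.sq_sqrt (integral_nonneg_of_ae hφ₂)]
    _ ≤ _ := pow_add_pow_le (by positivity) (by positivity) two_ne_zero

theorem ae_weightedSq_nonneg {w : X → ℝ} (hw : 0 ≤ᵐ[μ] w) (f : X → F) :
    0 ≤ᵐ[μ] weightedSq w f :=
  hw.mono fun _ hx => mul_nonneg hx (sq_nonneg _)

theorem ae_weightedSq_add_nonneg {w₀ w₁ : X → ℝ} (hw₀ : 0 ≤ᵐ[μ] w₀) (hw₁ : 0 ≤ᵐ[μ] w₁)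
    (u₀ u₁ : X → F) : 0 ≤ᵐ[μ] fun x => weightedSq w₀ u₀ x + weightedSq w₁ u₁ x := by
  filter_upwards [ae_weightedSq_nonneg hw₀ u₀, ae_weightedSq_nonneg hw₁ u₁] with x h₀ h₁
  exact add_nonneg h₀ h₁

theorem weightedL2NormLE_of_weightedSq_le {w φ₁ φ₂ : X → ℝ} {f : X → F} {c₁ c₂ : ℝ}
    (hc₁ : 0 ≤ c₁) (hc₂ : 0 ≤ c₂) (hw : 0 ≤ᵐ[μ] w) (hw_meas : AEStronglyMeasurable w μ)
    (hf_meas : AEStronglyMeasurable f μ) (hφ₁ : 0 ≤ᵐ[μ] φ₁) (hφ₂ : 0 ≤ᵐ[μ] φ₂)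
    (hint₁ : Integrable φ₁ μ) (hint₂ : Integrable φ₂ μ)
    (hle : ∀ᵐ x ∂μ, weightedSq w f x ≤ c₁ ^ 2 * φ₁ x + c₂ ^ 2 * φ₂ x) :
    WeightedL2NormLE μ w f (c₁ * √(∫ x, φ₁ x ∂μ) + c₂ * √(∫ x, φ₂ x ∂μ)) := by
  have hf := ae_weightedSq_nonneg hw f
  refine ⟨?_, sqrt_integral_le_add hc₁ hc₂ hf hφ₁ hφ₂ hint₁ hint₂ hle⟩
  refine ((hint₁.const_mul (c₁ ^ 2)).add (hint₂.const_mul (c₂ ^ 2))).mono'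
    (hw_meas.mul (hf_meas.norm.pow 2)) ?_
  filter_upwards [hf, hle] with x hx hxle
  exact (Real.norm_of_nonneg hx).trans_le hxle

theorem sqrt_integral_weightedSq_add_le {w₀ w₁ : X → ℝ} {u₀ u₁ : X → F}
    (hw₀ : 0 ≤ᵐ[μ] w₀) (hw₁ : 0 ≤ᵐ[μ] w₁)
    (hint₀ : Integrable (weightedSq w₀ u₀) μ) (hint₁ : Integrable (weightedSq w₁ u₁) μ) :
    √(∫ x, (weightedSq w₀ u₀ x + weightedSq w₁ u₁ x) ∂μ) ≤
      weightedL2Norm μ w₀ u₀ + weightedL2Norm μ w₁ u₁ := by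
  simpa only [one_mul, weightedL2Norm] using
    sqrt_integral_le_add zero_le_one zero_le_one (ae_weightedSq_add_nonneg hw₀ hw₁ u₀ u₁)
      (ae_weightedSq_nonneg hw₀ u₀) (ae_weightedSq_nonneg hw₁ u₁) hint₀ hint₁
      (ae_of_all _ fun x => by simp)

variable {w w₀ w₁ w₂ θ ω : X → ℝ} {f u₀ u₁ : X → F} {A β γ : ℝ}

theorem ae_nonneg_of_eq_mul_sq (hw : 0 ≤ᵐ[μ] w) (hw₁ : ∀ᵐ x ∂μ, w₁ x = w x * ω x ^ 2) :
    0 ≤ᵐ[μ] w₁ := by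
  filter_upwards [hw, hw₁] with x hx hx₁
  exact (mul_nonneg hx (sq_nonneg _)).trans_eq hx₁.symm

theorem weightedL2NormLE_of_norm_le (hA : 0 ≤ A) (hw : 0 ≤ᵐ[μ] w)
    (hw_meas : AEStronglyMeasurable w μ) (hf_meas : AEStronglyMeasurable f μ)
    (hw₁ : ∀ᵐ x ∂μ, w₁ x = w x * ω x ^ 2)
    (hf : ∀ᵐ x ∂μ, ‖f x‖ ≤ A * (‖u₀ x‖ + ω x * ‖u₁ x‖))
    (hint₀ : Integrable (weightedSq w u₀) μ) (hint₁ : Integrable (weightedSq w₁ u₁) μ) :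
    WeightedL2NormLE μ w f (2 * A * (weightedL2Norm μ w u₀ + weightedL2Norm μ w₁ u₁)) := by
  rw [mul_add]
  refine weightedL2NormLE_of_weightedSq_le (by positivity) (by positivity) hw hw_meas hf_meas
    (ae_weightedSq_nonneg hw u₀) (ae_weightedSq_nonneg (ae_nonneg_of_eq_mul_sq hw hw₁) u₁)
    hint₀ hint₁ ?_
  filter_upwards [hw, hw₁, hf] with x (hx : 0 ≤ w x) hx₁ hfx
  calc w x * ‖f x‖ ^ 2 ≤ w x * (A * (‖u₀ x‖ + ω x * ‖u₁ x‖)) ^ 2 := by gcongr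
    _ = w x * A ^ 2 * (‖u₀ x‖ + ω x * ‖u₁ x‖) ^ 2 := by ring
    _ ≤ w x * A ^ 2 * (4 * (‖u₀ x‖ ^ 2 + (ω x * ‖u₁ x‖) ^ 2)) := by
        gcongr
        exact add_sq_le.trans (by gcongr; norm_num)
    _ = (2 * A) ^ 2 * weightedSq w u₀ x + (2 * A) ^ 2 * weightedSq w₁ u₁ x := by
        rw [weightedSq, weightedSq, hx₁]
        ring

theorem weightedL2NormLE_of_norm_le_add_mul (hA : 0 ≤ A) (hβ : 0 ≤ β) (hγ : 0 ≤ γ)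
    (hw : 0 ≤ᵐ[μ] w) (hw_meas : AEStronglyMeasurable w μ) (hf_meas : AEStronglyMeasurable f μ)
    (hw₀ : ∀ᵐ x ∂μ, w₀ x = w x * θ x ^ 2) (hw₁ : ∀ᵐ x ∂μ, w₁ x = w x * ω x ^ 2)
    (hw₂ : ∀ᵐ x ∂μ, w₂ x = w₀ x * ω x ^ 2)
    (hf : ∀ᵐ x ∂μ, ‖f x‖ ≤ (β + γ * θ x) * (A * (‖u₀ x‖ + ω x * ‖u₁ x‖)))
    (hint : Integrable (weightedSq w u₀) μ) (hint₀ : Integrable (weightedSq w₀ u₀) μ)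
    (hint₁ : Integrable (weightedSq w₁ u₁) μ) (hint₂ : Integrable (weightedSq w₂ u₁) μ) :
    WeightedL2NormLE μ w f
      (2 * A * γ * (weightedL2Norm μ w₀ u₀ + weightedL2Norm μ w₂ u₁) +
        2 * A * β * (weightedL2Norm μ w u₀ + weightedL2Norm μ w₁ u₁)) := by
  have hw₀_nonneg := ae_nonneg_of_eq_mul_sq hw hw₀
  have hw₁_nonneg := ae_nonneg_of_eq_mul_sq hw hw₁
  have hw₂_nonneg := ae_nonneg_of_eq_mul_sq hw₀_nonneg hw₂
  have hsplit := weightedL2NormLE_of_weightedSq_le (c₁ := 2 * A * γ) (c₂ := 2 * A * β)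
    (by positivity) (by positivity) hw hw_meas hf_meas
    (ae_weightedSq_add_nonneg hw₀_nonneg hw₂_nonneg u₀ u₁)
    (ae_weightedSq_add_nonneg hw hw₁_nonneg u₀ u₁) (hint₀.add hint₂) (hint.add hint₁) ?_
  · refine ⟨hsplit.1, hsplit.2.trans ?_⟩
    gcongr
    · exact sqrt_integral_weightedSq_add_le hw₀_nonneg hw₂_nonneg hint₀ hint₂
    · exact sqrt_integral_weightedSq_add_le hw hw₁_nonneg hint hint₁
  filter_upwards [hw, hw₀, hw₁, hw₂, hf] with x (hx : 0 ≤ w x) hx₀ hx₁ hx₂ hfx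
  calc w x * ‖f x‖ ^ 2
      ≤ w x * ((β + γ * θ x) * (A * (‖u₀ x‖ + ω x * ‖u₁ x‖))) ^ 2 := by gcongr
    _ = w x * A ^ 2 * ((β + γ * θ x) ^ 2 * (‖u₀ x‖ + ω x * ‖u₁ x‖) ^ 2) := by ring
    _ ≤ w x * A ^ 2 * (2 * (β ^ 2 + (γ * θ x) ^ 2) *
          (2 * (‖u₀ x‖ ^ 2 + (ω x * ‖u₁ x‖) ^ 2))) := by
        gcongr <;> exact add_sq_le
    _ = (2 * A * γ) ^ 2 * (weightedSq w₀ u₀ x + weightedSq w₂ u₁ x) +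
          (2 * A * β) ^ 2 * (weightedSq w u₀ x + weightedSq w₁ u₁ x) := by
        simp only [weightedSq, hx₀, hx₁, hx₂]
        ring

end WeightedL2

section SobolevWeights

variable {X : Type*} {ρ : X → ℝ}

/-- The weight `|ξ|^{2s}` of the homogeneous Sobolev space of order `s`, where `ρ` plays the role
of `|ξ|`. -/
noncomputable def homogeneousWeight (ρ : X → ℝ) (s : ℝ) (x : X) : ℝ :=
  ρ x ^ (2 * s)

/-- The weight `|ξ|^{2s} ⟨ξ⟩⁻⁴` of `v ↦ ‖⟨D⟩⁻² v‖` in the homogeneous Sobolev space of order `s`. -/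
noncomputable def smoothedWeight (ρ : X → ℝ) (s : ℝ) (x : X) : ℝ :=
  ρ x ^ (2 * s) * ((1 + ρ x ^ 2) ^ 2)⁻¹

theorem homogeneousWeight_add_two {x : X} (hx : 0 < ρ x) (s : ℝ) :
    homogeneousWeight ρ (s + 2) x = homogeneousWeight ρ s x * (ρ x ^ 2) ^ 2 := by
  rw [homogeneousWeight, homogeneousWeight, ← pow_mul, ← Real.rpow_add_natCast hx.ne']
  congr 1
  push_cast
  ring

theorem homogeneousWeight_sub_two {x : X} (hx : 0 < ρ x) (s : ℝ) :
    homogeneousWeight ρ (s - 2) x = homogeneousWeight ρ s x * ((ρ x ^ 2)⁻¹) ^ 2 := by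
  have h := homogeneousWeight_add_two hx (s - 2)
  rw [sub_add_cancel] at h
  rw [h]
  field_simp

theorem smoothedWeight_eq (x : X) (s : ℝ) :
    smoothedWeight ρ s x = homogeneousWeight ρ s x * ((1 + ρ x ^ 2)⁻¹) ^ 2 := by
  rw [smoothedWeight, homogeneousWeight, inv_pow]

end SobolevWeights

theorem aestronglyMeasurable_of_hasDerivWithinAt {X E : Type*} [MeasurableSpace X]
    [NormedAddCommGroup E] [NormedSpace ℝ E] {μ : Measure X} {u : ℝ → X → E} {v : X → E} {t : ℝ}
    (hu : ∀ s, t ≤ s → AEStronglyMeasurable (u s) μ)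
    (hv : ∀ᵐ x ∂μ, HasDerivWithinAt (fun s => u s x) (v x) (Ioi t) t) :
    AEStronglyMeasurable v μ := by
  refine aestronglyMeasurable_of_tendsto_ae (𝓝[>] t)
    (f := fun z x => (z - t)⁻¹ • (u (max z t) x - u t x))
    (fun z => ((hu _ (le_max_right z t)).sub (hu t le_rfl)).const_smul _) ?_
  filter_upwards [hv] with x hx
  refine ((hasDerivWithinAt_iff_tendsto_slope' self_notMem_Ioi).1 hx).congr' ?_
  filter_upwards [self_mem_nhdsWithin] with z (hz : t < z)
  rw [max_eq_left hz.le, slope_def_module]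

theorem effective_increasing_viscoelastic_decay_general {X F : Type*} [MeasurableSpace X]
    [NormedAddCommGroup F] [NormedSpace ℝ F] {μ : Measure X} {ρ : X → ℝ}
    (hρ : ∀ᵐ x ∂μ, 0 < ρ x) (hρ_meas : AEMeasurable ρ μ) {a : ℝ} {b b' g g' : ℝ → ℝ}
    (h : IsEffectiveIncreasing a b b' g g') :
    ∃ C : ℝ, 0 < C ∧ ∀ (σ : ℝ) (u v : ℝ → X → F),
      (∀ s, 0 ≤ s → AEStronglyMeasurable (u s) μ) →
      (∀ᵐ x ∂μ, IsDampedOscillation (viscousDamping b g (ρ x)) (fun _ => ρ x ^ 2)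
        (fun s => u s x) (fun s => v s x)) →
      ∀ t : ℝ, 0 ≤ t → Integrable (weightedSq (homogeneousWeight ρ σ) (u 0)) μ →
        (Integrable (weightedSq (smoothedWeight ρ σ) (v 0)) μ →
          WeightedL2NormLE μ (homogeneousWeight ρ σ) (u t)
            (C * (weightedL2Norm μ (homogeneousWeight ρ σ) (u 0) +
              weightedL2Norm μ (smoothedWeight ρ σ) (v 0)))) ∧
        (Integrable (weightedSq (smoothedWeight ρ σ) (v 0)) μ →
          Integrable (weightedSq (homogeneousWeight ρ (σ + 2)) (u 0)) μ →
          Integrable (weightedSq (smoothedWeight ρ (σ + 2)) (v 0)) μ →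
          WeightedL2NormLE μ (homogeneousWeight ρ σ) (v t)
            (C * g t * (weightedL2Norm μ (homogeneousWeight ρ (σ + 2)) (u 0) +
              weightedL2Norm μ (smoothedWeight ρ (σ + 2)) (v 0)) +
            C * b t * (weightedL2Norm μ (homogeneousWeight ρ σ) (u 0) +
              weightedL2Norm μ (smoothedWeight ρ σ) (v 0)))) ∧
        (Integrable (weightedSq (homogeneousWeight ρ (σ + 2)) (u 0)) μ →
          Integrable (weightedSq (homogeneousWeight ρ σ) (v 0)) μ →
          Integrable (weightedSq (homogeneousWeight ρ (σ - 2)) (v 0)) μ →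
          WeightedL2NormLE μ (homogeneousWeight ρ σ) (v t)
            (C * g t * (weightedL2Norm μ (homogeneousWeight ρ (σ + 2)) (u 0) +
              weightedL2Norm μ (homogeneousWeight ρ σ) (v 0)) +
            C * b t * (weightedL2Norm μ (homogeneousWeight ρ σ) (u 0) +
              weightedL2Norm μ (homogeneousWeight ρ (σ - 2)) (v 0)))) := by
  obtain ⟨A, hA, hmode⟩ := h.exists_mode_bound F
  refine ⟨2 * A, by positivity, fun σ u v hu_meas huv t ht hu => ?_⟩
  have hb := (h.friction_pos t ht).le
  have hg := (h.viscosity_pos t ht).le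
  have hw : 0 ≤ᵐ[μ] homogeneousWeight ρ σ := hρ.mono fun x hx => Real.rpow_nonneg hx.le _
  have hw_meas : AEStronglyMeasurable (homogeneousWeight ρ σ) μ :=
    (hρ_meas.pow_const _).aestronglyMeasurable
  have hv_meas : AEStronglyMeasurable (v t) μ :=
    aestronglyMeasurable_of_hasDerivWithinAt (fun s hs => hu_meas s (ht.trans hs))
      (huv.mono fun x hx => (hx.hasDerivWithinAt_position t ht).mono fun s hs => ht.trans hs.le)
  have hbound := huv.mono fun x hx => hmode (ρ x) _ _ hx t ht
  have hvel := hbound.mono fun _ hx => hx.2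
  have hplus := hρ.mono fun x hx => homogeneousWeight_add_two hx σ
  have hsmoothed (s : ℝ) := ae_of_all μ fun x => smoothedWeight_eq (ρ := ρ) x s
  refine ⟨fun hv => ?_, fun hv hu₂ hv₂ => ?_, fun hu₂ hv hv₂ => ?_⟩
  · exact weightedL2NormLE_of_norm_le hA.le hw hw_meas (hu_meas t ht) (hsmoothed σ)
      (hbound.mono fun _ hx => hx.1) hu hv
  · exact weightedL2NormLE_of_norm_le_add_mul hA.le hb hg hw hw_meas hv_meas hplus
      (hsmoothed σ) (hsmoothed (σ + 2)) hvel hu hu₂ hv hv₂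
  · have hminus (s : ℝ) := hρ.mono fun x hx => homogeneousWeight_sub_two hx s
    have hminus_plus := hminus (σ + 2)
    rw [add_sub_cancel_right] at hminus_plus
    refine weightedL2NormLE_of_norm_le_add_mul (ω := fun x => (ρ x ^ 2)⁻¹) hA.le hb hg hw hw_meas
      hv_meas hplus (hminus σ) hminus_plus ?_ hu hu₂ hv₂ hv
    filter_upwards [hρ, hvel] with x hx hvx
    refine hvx.trans ?_
    rw [viscousDamping]
    gcongr
    exact le_add_of_nonneg_left zero_le_one

/-- Theorem 4.1 of the paper: effective friction together with an increasing
viscoelastic coefficient `g = g(t)`. -/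
theorem effective_increasing_viscoelastic_decay
    (n : ℕ) (hn : 1 ≤ n)
    (b g G : ℝ → ℝ)
    (hg_smooth : ContDiff ℝ 2 g)
    (hg_pos : ∀ t : ℝ, 0 ≤ t → 0 < g t)
    (hg_deriv_pos : ∀ t : ℝ, 0 ≤ t → 0 < deriv g t)
    (hg_int : IntegrableOn (fun t => (g t)⁻¹) (Set.Ici (0 : ℝ)))
    (hG : ∀ t : ℝ, G t = (1 / 2) * ∫ τ in (0 : ℝ)..t, g τ)
    (C₁ C₂ : ℝ) (hC₁ : 0 < C₁) (hC₂ : 0 < C₂)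
    (hg1 : ∀ t : ℝ, 0 < t → |deriv g t| ≤ C₁ * (g t) ^ 2 / G t)
    (hg2 : ∀ t : ℝ, 0 < t → |deriv (deriv g) t| ≤ C₂ * (g t) ^ 3 / (G t) ^ 2)
    (hb_smooth : ContDiff ℝ 2 b)
    (hb_pos : ∀ t : ℝ, 0 ≤ t → 0 < b t)
    (hb_sign : (∀ t : ℝ, 0 ≤ t → 0 ≤ deriv b t) ∨ (∀ t : ℝ, 0 ≤ t → deriv b t < 0))
    (hb_eff : Tendsto (fun t => t * b t) atTop atTop)
    (Cb : ℝ) (hCb : 0 < Cb)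
    (hb1 : ∀ t : ℝ, 0 ≤ t → |deriv b t| ≤ Cb * b t / (1 + t))
    (hb2 : ∀ t : ℝ, 0 ≤ t → |deriv (deriv b) t| ≤ Cb * b t / (1 + t) ^ 2)
    (a : ℝ) (ha : a < 1)
    (hbEF : ∀ t : ℝ, 0 ≤ t → |deriv b t| ≤ a * (b t) ^ 2) :
    ∀ σ : ℝ, 0 ≤ σ →
      ∃ C' : ℝ, 0 < C' ∧
        ∀ (uh : ℝ → EuclideanSpace ℝ (Fin n) → ℂ) (u₀ u₁ : EuclideanSpace ℝ (Fin n) → ℂ),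
          Measurable (fun p : ℝ × EuclideanSpace ℝ (Fin n) => uh p.1 p.2) →
          (∀ ξ : EuclideanSpace ℝ (Fin n), ContDiff ℝ 2 (fun s => uh s ξ)) →
          (∀ (ξ : EuclideanSpace ℝ (Fin n)) (t : ℝ), 0 ≤ t →
            deriv (deriv (fun s => uh s ξ)) t + ((‖ξ‖ ^ 2 : ℝ) : ℂ) * uh t ξ +
              ((b t + g t * ‖ξ‖ ^ 2 : ℝ) : ℂ) * deriv (fun s => uh s ξ) t = 0) →
          (∀ ξ : EuclideanSpace ℝ (Fin n), uh 0 ξ = u₀ ξ) →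
          (∀ ξ : EuclideanSpace ℝ (Fin n), deriv (fun s => uh s ξ) 0 = u₁ ξ) →
          ∀ t : ℝ, 0 ≤ t →
            Integrable (fun ξ : EuclideanSpace ℝ (Fin n) => ‖ξ‖ ^ (2 * σ) * ‖u₀ ξ‖ ^ 2) →
            Integrable (fun ξ : EuclideanSpace ℝ (Fin n) => ‖ξ‖ ^ (2 * σ) * ((1 + ‖ξ‖ ^ 2) ^ 2)⁻¹ * ‖u₁ ξ‖ ^ 2) →
            Integrable (fun ξ : EuclideanSpace ℝ (Fin n) => ‖ξ‖ ^ (2 * (σ + 2)) * ‖u₀ ξ‖ ^ 2) →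
            Integrable (fun ξ : EuclideanSpace ℝ (Fin n) => ‖ξ‖ ^ (2 * (σ + 2)) * ((1 + ‖ξ‖ ^ 2) ^ 2)⁻¹ * ‖u₁ ξ‖ ^ 2) →
            Integrable (fun ξ : EuclideanSpace ℝ (Fin n) => ‖ξ‖ ^ (2 * σ) * ‖u₁ ξ‖ ^ 2) →
            Integrable (fun ξ : EuclideanSpace ℝ (Fin n) => ‖ξ‖ ^ (2 * (σ - 2)) * ‖u₁ ξ‖ ^ 2) →
            (Real.sqrt (∫ ξ : EuclideanSpace ℝ (Fin n), ‖ξ‖ ^ (2 * σ) * ‖uh t ξ‖ ^ 2) ≤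
                C' * (Real.sqrt (∫ ξ : EuclideanSpace ℝ (Fin n), ‖ξ‖ ^ (2 * σ) * ‖u₀ ξ‖ ^ 2) + Real.sqrt (∫ ξ : EuclideanSpace ℝ (Fin n), ‖ξ‖ ^ (2 * σ) * ((1 + ‖ξ‖ ^ 2) ^ 2)⁻¹ * ‖u₁ ξ‖ ^ 2))) ∧
              ((∀ s : ℝ, 0 ≤ s → 0 ≤ deriv b s) →
                Real.sqrt (∫ ξ : EuclideanSpace ℝ (Fin n), ‖ξ‖ ^ (2 * σ) * ‖deriv (fun s => uh s ξ) t‖ ^ 2) ≤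
                  C' * g t * (Real.sqrt (∫ ξ : EuclideanSpace ℝ (Fin n), ‖ξ‖ ^ (2 * (σ + 2)) * ‖u₀ ξ‖ ^ 2) + Real.sqrt (∫ ξ : EuclideanSpace ℝ (Fin n), ‖ξ‖ ^ (2 * (σ + 2)) * ((1 + ‖ξ‖ ^ 2) ^ 2)⁻¹ * ‖u₁ ξ‖ ^ 2)) +
                    C' * b t * (Real.sqrt (∫ ξ : EuclideanSpace ℝ (Fin n), ‖ξ‖ ^ (2 * σ) * ‖u₀ ξ‖ ^ 2) + Real.sqrt (∫ ξ : EuclideanSpace ℝ (Fin n), ‖ξ‖ ^ (2 * σ) * ((1 + ‖ξ‖ ^ 2) ^ 2)⁻¹ * ‖u₁ ξ‖ ^ 2))) ∧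
              ((∀ s : ℝ, 0 ≤ s → deriv b s < 0) →
                Real.sqrt (∫ ξ : EuclideanSpace ℝ (Fin n), ‖ξ‖ ^ (2 * σ) * ‖deriv (fun s => uh s ξ) t‖ ^ 2) ≤
                  C' * g t * (Real.sqrt (∫ ξ : EuclideanSpace ℝ (Fin n), ‖ξ‖ ^ (2 * (σ + 2)) * ‖u₀ ξ‖ ^ 2) + Real.sqrt (∫ ξ : EuclideanSpace ℝ (Fin n), ‖ξ‖ ^ (2 * σ) * ‖u₁ ξ‖ ^ 2)) +
                    C' * b t * (Real.sqrt (∫ ξ : EuclideanSpace ℝ (Fin n), ‖ξ‖ ^ (2 * σ) * ‖u₀ ξ‖ ^ 2) + Real.sqrt (∫ ξ : EuclideanSpace ℝ (Fin n), ‖ξ‖ ^ (2 * (σ - 2)) * ‖u₁ ξ‖ ^ 2))) := by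
  intro σ _
  have : Nonempty (Fin n) := ⟨⟨0, hn⟩⟩
  have hnorm_pos : ∀ᵐ ξ : EuclideanSpace ℝ (Fin n), 0 < ‖ξ‖ :=
    (Measure.ae_ne volume 0).mono fun _ => norm_pos_iff.2
  have hcoeff := isEffectiveIncreasing_of_abs_deriv_le ha (hb_smooth.differentiable two_ne_zero)
    hb_pos hbEF (hg_smooth.differentiable two_ne_zero) hg_pos (fun t ht => (hg_deriv_pos t ht).le)
    hg_int
  obtain ⟨C, hC, hdecay⟩ := effective_increasing_viscoelastic_decay_general (F := ℂ) hnorm_pos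
    measurable_norm.aemeasurable hcoeff
  refine ⟨C, hC, fun uh u₀ u₁ hmeas hsmooth hode h₀ h₁ t ht hu hv hu₂ hv₂ hv' hv'₂ => ?_⟩
  obtain rfl : uh 0 = u₀ := funext h₀
  obtain rfl : (fun ξ => deriv (fun s => uh s ξ) 0) = u₁ := funext h₁
  obtain ⟨hpos, hvel, hvel'⟩ := hdecay σ uh (fun s ξ => deriv (fun s => uh s ξ) s)
    (fun s _ => (hmeas.comp measurable_prodMk_left).aestronglyMeasurable)
    (ae_of_all _ fun ξ => isDampedOscillation_of_contDiff (hsmooth ξ) (hode ξ)) t ht hu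
  exact ⟨(hpos hv).2, fun _ => (hvel hv hu₂ hv₂).2, fun _ => (hvel' hu₂ hv' hv'₂).2⟩
end

section
/- Let n ≥ 1. Assume b : [0,∞) → ℝ is C² with b(t) > 0, b' of constant sign, lim_{t→∞} t·b(t) = ∞, |b'(t)| ≤ C b(t)/(1+t) and |b''(t)| ≤ C b(t)/(1+t)² for all t (some C > 0), and |b'(t)| ≤ a·b(t)² for all t with a fixed a < 1. Assume g : [0,∞) → ℝ is C¹ with g(t) > 0 and g'(t) < 0 for all t, ∫₀^∞ g(τ) dτ < ∞, b(t)g(t) ≤ ½ for all t, b'(t)/b(t) ≤ −g'(t)/g(t) for all t, and ∫₀^∞ g'(τ)²/g(τ) dτ < ∞. Write ⟨ξ⟩ = (1+|ξ|²)^{1/2} and B(t) = 1 + ∫_{t₀}^t 1/b(τ) dτ. Then there exist t₀ ≥ 0 and, for every real σ, a constant C' > 0 such that every Fourier solution û with data û₀, û₁ satisfies for all t ≥ t₀ (whenever the data integrals are finite): for σ ≥ 1, (∫ |ξ|^{2σ}|û(t,ξ)|² dξ)^{1/2} ≤ C' B(t)^{−σ/2} (∫ ⟨ξ⟩^{2σ}|û₀|²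 dξ)^{1/2} + C' B(t)^{−(σ−1)/2} (∫ ⟨ξ⟩^{2(σ−1)}|û₁|² dξ)^{1/2}; and for σ ≥ 0, (∫ |ξ|^{2σ}|∂ₜû(t,ξ)|² dξ)^{1/2} ≤ C' B(t)^{−(σ+1)/2} (∫ ⟨ξ⟩^{2(σ+1)}|û₀|² dξ)^{1/2} + C' B(t)^{−σ/2} (∫ ⟨ξ⟩^{2σ}|û₁|² dξ)^{1/2}. -/
open MeasureTheory Filter

/-!
For each frequency `L = |ξ|²` the mode `y'' + L y + (b + g L) y' = 0` admits the Lyapunov functional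
`F = |y'|² + L |y|² + ε k ⟪y', y⟫` with `k = L b / (L + b²)`. The rate `k` interpolates between
`L / b` at low and `b` at high frequencies. Boundedness of `b'/b²` and of `b g` makes `F` comparable
to the energy and yields `F' ≤ -c k F` for a small constant `c`.

With `B(t) = 1 + ∫₀ᵗ 1/b`, the weight `Q = 1 + s/c + L (A + B)` satisfies `s Q' ≤ c k Q` as soon as
`(s/c) / b² ≤ A + B`, and such an `A` exists because `b' = o(b²)`. Therefore `Q ^ s F` is
nonincreasing, that is, `(L B) ^ s E(t) ≲ (1 + L) ^ s E(0)`. Using this for `s` and for `s + 1`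
separates the contributions of `y(0)` and `y'(0)`, and integrating over the frequencies finishes the
proof.
-/

section RealAnalysis

theorem antitoneOn_Ici_of_hasDerivAt_nonpos {f f' : ℝ → ℝ} {t₀ : ℝ}
    (hf : ∀ t, t₀ ≤ t → HasDerivAt f (f' t) t) (hf' : ∀ t, t₀ ≤ t → f' t ≤ 0) :
    AntitoneOn f (Set.Ici t₀) :=
  antitoneOn_of_hasDerivWithinAt_nonpos (convex_Ici t₀)
    (fun t ht => (hf t ht).continuousAt.continuousWithinAt)
    (fun t ht => (hf t (interior_subset ht)).hasDerivWithinAt)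
    (fun t ht => hf' t (interior_subset ht))

theorem exists_forall_Ici_le_of_eventually_le {f : ℝ → ℝ} {t₀ c : ℝ}
    (hf : ContinuousOn f (Set.Ici t₀)) (hc : ∀ᶠ t in atTop, f t ≤ c) :
    ∃ C, 0 ≤ C ∧ ∀ t, t₀ ≤ t → f t ≤ C := by
  obtain ⟨T, hT⟩ := eventually_atTop.1 hc
  obtain ⟨A, hA⟩ := (isCompact_Icc (a := t₀) (b := T)).bddAbove_image
    (hf.mono Set.Icc_subset_Ici_self)
  refine ⟨max 0 (max A c), le_max_left _ _, fun t ht => le_max_of_le_right ?_⟩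
  rcases le_total t T with h | h
  · exact le_max_of_le_left (hA ⟨t, ⟨ht, h⟩, rfl⟩)
  · exact le_max_of_le_right (hT t h)

theorem antitoneOn_rpow_mul {F F' Q Q' κ : ℝ → ℝ} {s t₀ : ℝ}
    (hF : ∀ t, t₀ ≤ t → HasDerivAt F (F' t) t) (hQ : ∀ t, t₀ ≤ t → HasDerivAt Q (Q' t) t)
    (hF₀ : ∀ t, t₀ ≤ t → 0 ≤ F t) (hQ₀ : ∀ t, t₀ ≤ t → 0 < Q t)
    (hF' : ∀ t, t₀ ≤ t → F' t ≤ -(κ t * F t)) (hQ' : ∀ t, t₀ ≤ t → s * Q' t ≤ κ t * Q t) :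
    AntitoneOn (fun t => Q t ^ s * F t) (Set.Ici t₀) := by
  refine antitoneOn_Ici_of_hasDerivAt_nonpos
    (fun t ht => ((hQ t ht).rpow_const (Or.inl (hQ₀ t ht).ne')).mul (hF t ht)) fun t ht => ?_
  have hQt := hQ₀ t ht
  have hsplit : Q t ^ s = Q t ^ (s - 1) * Q t := by
    rw [← Real.rpow_add_one hQt.ne', sub_add_cancel]
  calc Q' t * s * Q t ^ (s - 1) * F t + Q t ^ s * F' t
      = Q t ^ (s - 1) * (s * Q' t * F t + Q t * F' t) := by rw [hsplit]; ring
    _ ≤ Q t ^ (s - 1) * (κ t * Q t * F t + Q t * -(κ t * F t)) := by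
        gcongr ?_ * (?_ * _ + _ * ?_)
        exacts [hF₀ t ht, hQ' t ht, hF' t ht]
    _ = 0 := by ring

theorem rpow_neg_half_sq {B : ℝ} (hB : 0 ≤ B) (p : ℝ) : (B ^ (-(p / 2))) ^ 2 = B ^ (-p) := by
  rw [← Real.rpow_mul_natCast hB]
  congr 1
  push_cast
  ring

theorem rpow_mul_le_of_mul_rpow_mul_le {L B s E K C W : ℝ} (hL : 0 ≤ L) (hB : 0 < B) (hW : 0 ≤ W)
    (hKC : K ≤ C ^ 2) (h : (L * B) ^ s * E ≤ K * W) :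
    L ^ s * E ≤ (C * B ^ (-(s / 2))) ^ 2 * W := by
  rw [mul_pow, rpow_neg_half_sq hB.le, Real.rpow_neg hB.le]
  calc L ^ s * E = (L * B) ^ s * E * (B ^ s)⁻¹ := by
        rw [Real.mul_rpow hL hB.le]
        field_simp
    _ ≤ C ^ 2 * W * (B ^ s)⁻¹ := by
        gcongr ?_ * _
        exact h.trans (by gcongr)
    _ = C ^ 2 * (B ^ s)⁻¹ * W := by ring

theorem le_mul_add_mul_of_le_of_mul_le {L X Y Z p r : ℝ} (hL : 0 ≤ L) (hX : 0 ≤ X) (hY : 0 ≤ Y)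
    (hp : 0 ≤ p) (hr : 0 ≤ r) (hZ : Z ≤ p * (X + L * Y)) (hLZ : L * Z ≤ r * (X + L * Y)) :
    Z ≤ r * Y + p * X := by
  rcases (add_nonneg hX (mul_nonneg hL hY)).eq_or_lt with h₀ | hpos
  · rw [← h₀, mul_zero] at hZ
    exact hZ.trans (by positivity)
  · refine le_of_mul_le_mul_right ?_ hpos
    calc Z * (X + L * Y) = Z * X + L * Z * Y := by ring
      _ ≤ p * (X + L * Y) * X + r * (X + L * Y) * Y := by gcongr
      _ = (r * Y + p * X) * (X + L * Y) := by ring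

end RealAnalysis

section Integration

variable {X : Type*} [MeasurableSpace X] {μ : Measure X}

theorem integrable_and_sqrt_integral_le {f h₁ h₂ : X → ℝ} {c₁ c₂ : ℝ} (hc₁ : 0 ≤ c₁) (hc₂ : 0 ≤ c₂)
    (hfm : AEStronglyMeasurable f μ) (hf : ∀ x, 0 ≤ f x) (hh₁ : Integrable h₁ μ)
    (hh₂ : Integrable h₂ μ) (hle : ∀ x, f x ≤ c₁ ^ 2 * h₁ x + c₂ ^ 2 * h₂ x) :
    Integrable f μ ∧ √(∫ x, f x ∂μ) ≤ c₁ * √(∫ x, h₁ x ∂μ) + c₂ * √(∫ x, h₂ x ∂μ) := by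
  have hdom : Integrable (fun x => c₁ ^ 2 * h₁ x + c₂ ^ 2 * h₂ x) μ :=
    (hh₁.const_mul _).add (hh₂.const_mul _)
  have hfi : Integrable f μ := hdom.mono' hfm <| Eventually.of_forall fun x => by
    rw [Real.norm_of_nonneg (hf x)]
    exact hle x
  have le_sq_sqrt (r : ℝ) : r ≤ √r ^ 2 := Real.sq_sqrt'.symm ▸ le_max_left _ _
  refine ⟨hfi, Real.sqrt_le_iff.2 ⟨by positivity, ?_⟩⟩
  calc ∫ x, f x ∂μ ≤ ∫ x, (c₁ ^ 2 * h₁ x + c₂ ^ 2 * h₂ x) ∂μ := integral_mono hfi hdom hle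
    _ = c₁ ^ 2 * ∫ x, h₁ x ∂μ + c₂ ^ 2 * ∫ x, h₂ x ∂μ := by
        rw [integral_add (hh₁.const_mul _) (hh₂.const_mul _), integral_const_mul,
          integral_const_mul]
    _ ≤ c₁ ^ 2 * √(∫ x, h₁ x ∂μ) ^ 2 + c₂ ^ 2 * √(∫ x, h₂ x ∂μ) ^ 2 := by
        gcongr <;> exact le_sq_sqrt _
    _ = (c₁ * √(∫ x, h₁ x ∂μ)) ^ 2 + (c₂ * √(∫ x, h₂ x ∂μ)) ^ 2 := by ring
    _ ≤ (c₁ * √(∫ x, h₁ x ∂μ) + c₂ * √(∫ x, h₂ x ∂μ)) ^ 2 :=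
        pow_add_pow_le (by positivity) (by positivity) two_ne_zero

theorem aestronglyMeasurable_of_hasDerivAt {E : Type*} [NormedAddCommGroup E] [NormedSpace ℝ E]
    {u : ℝ → X → E} {v : X → E} {t : ℝ} (hu : ∀ s, t ≤ s → AEStronglyMeasurable (u s) μ)
    (hv : ∀ x, HasDerivAt (fun s => u s x) (v x) t) : AEStronglyMeasurable v μ := by
  have hstep : Tendsto (fun n : ℕ => 1 / ((n : ℝ) + 1)) atTop (nhdsWithin 0 (Set.Ioi 0)) :=
    tendsto_nhdsWithin_iff.2 ⟨tendsto_one_div_add_atTop_nhds_zero_nat,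
      Eventually.of_forall fun _ => Set.mem_Ioi.2 Nat.one_div_pos_of_nat⟩
  refine aestronglyMeasurable_of_tendsto_ae atTop (fun n => ?_)
    (Eventually.of_forall fun x => (hv x).tendsto_slope_zero_right.comp hstep)
  have hlater : t ≤ t + 1 / ((n : ℝ) + 1) := le_add_of_nonneg_right Nat.one_div_pos_of_nat.le
  exact ((hu _ hlater).sub (hu t le_rfl)).const_smul _

end Integration

section EffectiveFriction

/-- The friction clock `B(t) = 1 + ∫₀ᵗ dτ / b(τ)`, whose powers are the decay rates. -/
noncomputable def frictionScale (b : ℝ → ℝ) (t : ℝ) : ℝ := 1 + ∫ τ in (0 : ℝ)..t, (b τ)⁻¹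

/-- Effective friction on `[0, ∞)`: a positive `C¹` coefficient with `b' = o(b²)` at infinity. The
smoothness is required on the whole line so that `deriv b 0` is the derivative at the endpoint. -/
structure IsEffectiveFriction (b : ℝ → ℝ) : Prop where
  contDiff : ContDiff ℝ 1 b
  pos : ∀ t, 0 ≤ t → 0 < b t
  deriv_isLittleO : deriv b =o[atTop] fun t => b t ^ 2

namespace IsEffectiveFriction

variable {b : ℝ → ℝ}

theorem of_tendsto_mul_atTop {C : ℝ} (hb : ContDiff ℝ 1 b) (hpos : ∀ t, 0 ≤ t → 0 < b t)
    (hlim : Tendsto (fun t => t * b t) atTop atTop)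
    (hderiv : ∀ t, 0 ≤ t → |deriv b t| ≤ C * b t / (1 + t)) : IsEffectiveFriction b where
  contDiff := hb
  pos := hpos
  deriv_isLittleO := by
    refine Asymptotics.isLittleO_iff.2 fun c hc => ?_
    filter_upwards [hlim.eventually_ge_atTop (C / c), eventually_ge_atTop 0] with t hCt ht
    have hbt := hpos t ht
    rw [div_le_iff₀' hc] at hCt
    rw [Real.norm_eq_abs, Real.norm_of_nonneg (sq_nonneg _)]
    calc |deriv b t| ≤ C * b t / (1 + t) := hderiv t ht
      _ ≤ c * (t * b t) * b t / (1 + t) := by gcongr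
      _ = c * b t ^ 2 * (t / (1 + t)) := by ring
      _ ≤ c * b t ^ 2 :=
        mul_le_of_le_one_right (by positivity) ((div_le_one (by positivity)).2 (by linarith))

theorem hasDerivAt (hb : IsEffectiveFriction b) (t : ℝ) : HasDerivAt b (deriv b t) t :=
  (hb.contDiff.differentiable one_ne_zero t).hasDerivAt

theorem exists_abs_deriv_le (hb : IsEffectiveFriction b) :
    ∃ a, 0 ≤ a ∧ ∀ t, 0 ≤ t → |deriv b t| ≤ a * b t ^ 2 := by
  have hcont : ContinuousOn (fun t => |deriv b t| / b t ^ 2) (Set.Ici 0) :=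
    (hb.contDiff.continuous_deriv le_rfl).abs.continuousOn.div
      (hb.contDiff.continuous.pow 2).continuousOn fun t ht => pow_ne_zero 2 (hb.pos t ht).ne'
  have hlarge : ∀ᶠ t in atTop, |deriv b t| / b t ^ 2 ≤ 1 := by
    filter_upwards [hb.deriv_isLittleO.bound one_pos] with t ht
    rw [Real.norm_eq_abs, Real.norm_of_nonneg (sq_nonneg _), one_mul] at ht
    exact div_le_one_of_le₀ ht (sq_nonneg _)
  obtain ⟨a, ha, hle⟩ := exists_forall_Ici_le_of_eventually_le hcont hlarge
  exact ⟨a, ha, fun t ht => (div_le_iff₀ (pow_pos (hb.pos t ht) 2)).1 (hle t ht)⟩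

theorem one_le_frictionScale (hb : IsEffectiveFriction b) {t : ℝ} (ht : 0 ≤ t) :
    1 ≤ frictionScale b t :=
  le_add_of_nonneg_right <|
    intervalIntegral.integral_nonneg ht fun τ hτ => (inv_pos.2 (hb.pos τ hτ.1)).le

theorem hasDerivAt_frictionScale (hb : IsEffectiveFriction b) {t : ℝ} (ht : 0 ≤ t) :
    HasDerivAt (frictionScale b) (b t)⁻¹ t := by
  have hcont (τ : ℝ) (hτ : 0 ≤ τ) : ContinuousAt (fun τ => (b τ)⁻¹) τ :=
    hb.contDiff.continuous.continuousAt.inv₀ (hb.pos τ hτ).ne'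
  refine (intervalIntegral.integral_hasDerivAt_right ?_
    hb.contDiff.continuous.measurable.inv.stronglyMeasurable.stronglyMeasurableAtFilter
    (hcont t ht)).const_add 1
  refine ContinuousOn.intervalIntegrable fun τ hτ => (hcont τ ?_).continuousWithinAt
  exact (Set.uIcc_of_le ht ▸ hτ).1

theorem exists_div_sq_le (hb : IsEffectiveFriction b) {K : ℝ} (hK : 0 ≤ K) :
    ∃ A, 0 ≤ A ∧ ∀ t, 0 ≤ t → K / b t ^ 2 ≤ A + frictionScale b t := by
  have hderiv (t : ℝ) (ht : 0 ≤ t) : HasDerivAt (fun t => K / b t ^ 2 - frictionScale b t)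
      ((-(2 * K * deriv b t) - b t ^ 2) / b t ^ 3) t := by
    have hbt := hb.pos t ht
    refine ((((hb.hasDerivAt t).fun_pow 2).fun_inv (by positivity)).const_mul K).sub
      (hb.hasDerivAt_frictionScale ht) |>.congr_deriv ?_
    field_simp
    push_cast
    ring
  have hsmall : ∀ᶠ t in atTop, |deriv b t| ≤ (2 * K + 1)⁻¹ * b t ^ 2 := by
    filter_upwards [hb.deriv_isLittleO.bound (c := (2 * K + 1)⁻¹) (by positivity)] with t ht
    simpa using ht
  obtain ⟨T, hT⟩ := eventually_atTop.1 hsmall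
  have hanti : AntitoneOn (fun t => K / b t ^ 2 - frictionScale b t) (Set.Ici (max 0 T)) := by
    refine antitoneOn_Ici_of_hasDerivAt_nonpos (fun t ht => hderiv t (le_of_max_le_left ht))
      fun t ht => ?_
    have hbt := hb.pos t (le_of_max_le_left ht)
    have habs := (le_inv_mul_iff₀ (by positivity)).1 (hT t (le_of_max_le_right ht))
    have hneg := mul_le_mul_of_nonneg_left (neg_le_abs (deriv b t)) hK
    refine div_nonpos_of_nonpos_of_nonneg ?_ (by positivity)
    nlinarith [abs_nonneg (deriv b t)]
  obtain ⟨A, hA, hle⟩ := exists_forall_Ici_le_of_eventually_le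
    (fun t ht => (hderiv t ht).continuousAt.continuousWithinAt)
    ((eventually_ge_atTop (max 0 T)).mono fun t ht => hanti Set.self_mem_Ici ht ht)
  exact ⟨A, hA, fun t ht => sub_le_iff_le_add.1 (hle t ht)⟩

end IsEffectiveFriction

end EffectiveFriction

section DampingRate

/-- The decay rate, up to a constant factor, of a mode of squared frequency `L` under friction `β`.
It interpolates between `L / β` at low frequencies and `β` at high frequencies. -/
noncomputable def dampingRate (L β : ℝ) : ℝ := L * β / (L + β ^ 2)

variable {L β : ℝ}

theorem dampingRate_nonneg (hL : 0 ≤ L) (hβ : 0 ≤ β) : 0 ≤ dampingRate L β := by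
  unfold dampingRate
  positivity

theorem dampingRate_le_right (hL : 0 ≤ L) (hβ : 0 < β) : dampingRate L β ≤ β := by
  rw [dampingRate, div_le_iff₀ (by positivity)]
  nlinarith [pow_pos hβ 3]

theorem dampingRate_mul_le_left (hL : 0 ≤ L) (hβ : 0 < β) : dampingRate L β * β ≤ L := by
  rw [dampingRate, div_mul_eq_mul_div, div_le_iff₀ (by positivity)]
  nlinarith

theorem dampingRate_sq_le_left (hL : 0 ≤ L) (hβ : 0 < β) : dampingRate L β ^ 2 ≤ L :=
  calc dampingRate L β ^ 2 = dampingRate L β * dampingRate L β := sq _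
    _ ≤ dampingRate L β * β :=
      mul_le_mul_of_nonneg_left (dampingRate_le_right hL hβ) (dampingRate_nonneg hL hβ.le)
    _ ≤ L := dampingRate_mul_le_left hL hβ

theorem dampingRate_mul_add_le {γ M : ℝ} (hL : 0 ≤ L) (hβ : 0 < β) (hγ : 0 ≤ γ) (hM : β * γ ≤ M) :
    dampingRate L β * (β + γ * L) ≤ (1 + M) * L :=
  calc dampingRate L β * (β + γ * L) = dampingRate L β * β + dampingRate L β * γ * L := by ring
    _ ≤ L + β * γ * L := by
        gcongr
        exacts [dampingRate_mul_le_left hL hβ, dampingRate_le_right hL hβ]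
    _ ≤ L + M * L := by gcongr
    _ = (1 + M) * L := by ring

theorem exists_hasDerivAt_dampingRate {b : ℝ → ℝ} {b' a t : ℝ} (hL : 0 ≤ L) (hb₀ : 0 < b t)
    (hb : HasDerivAt b b' t) (hb' : |b'| ≤ a * b t ^ 2) :
    ∃ k', HasDerivAt (fun τ => dampingRate L (b τ)) k' t ∧
      |k'| ≤ a * (b t * dampingRate L (b t)) := by
  have hden : 0 < L + b t ^ 2 := by positivity
  refine ⟨L * b' * (L - b t ^ 2) / (L + b t ^ 2) ^ 2, ?_, ?_⟩
  · refine ((hb.const_mul L).fun_div ((hb.fun_pow 2).const_add L) hden.ne').congr_deriv ?_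
    congr 1
    push_cast
    ring
  · have hdiff : |L - b t ^ 2| ≤ L + b t ^ 2 := abs_le.2 ⟨by linarith, by nlinarith⟩
    rw [abs_div, abs_mul, abs_mul, abs_of_nonneg hL, abs_of_pos (pow_pos hden 2)]
    calc L * |b'| * |L - b t ^ 2| / (L + b t ^ 2) ^ 2
        ≤ L * (a * b t ^ 2) * (L + b t ^ 2) / (L + b t ^ 2) ^ 2 := by
          have := (abs_nonneg b').trans hb'
          gcongr
      _ = a * (b t * dampingRate L (b t)) := by
          rw [dampingRate]
          field_simp

theorem mul_inv_le_dampingRate_mul_weight {s c A B : ℝ} (hL : 0 ≤ L) (hβ : 0 < β) (hc : 0 < c)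
    (hAB : s / c / β ^ 2 ≤ A + B) :
    s * (L * β⁻¹) ≤ c * dampingRate L β * (1 + s / c + L * (A + B)) :=
  calc s * (L * β⁻¹) = c * dampingRate L β * (s / c + L * (s / c / β ^ 2)) := by
        rw [dampingRate]
        field_simp
        ring
    _ ≤ c * dampingRate L β * (1 + s / c + L * (A + B)) := by
        have := dampingRate_nonneg hL hβ.le
        gcongr
        linarith

theorem IsEffectiveFriction.antitoneOn_weight_rpow_mul {b F F' : ℝ → ℝ} {s c A : ℝ}
    (hb : IsEffectiveFriction b) (hL : 0 ≤ L) (hs : 0 ≤ s) (hc : 0 < c) (hA : 0 ≤ A)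
    (hAb : ∀ t, 0 ≤ t → s / c / b t ^ 2 ≤ A + frictionScale b t)
    (hF : ∀ t, 0 ≤ t → HasDerivAt F (F' t) t) (hF₀ : ∀ t, 0 ≤ t → 0 ≤ F t)
    (hF' : ∀ t, 0 ≤ t → F' t ≤ -(c * dampingRate L (b t) * F t)) :
    AntitoneOn (fun t => (1 + s / c + L * (A + frictionScale b t)) ^ s * F t) (Set.Ici 0) := by
  refine antitoneOn_rpow_mul hF
    (fun t ht => (((hb.hasDerivAt_frictionScale ht).const_add A).const_mul L).const_add _)
    hF₀ (fun t ht => ?_) hF'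
    (fun t ht => mul_inv_le_dampingRate_mul_weight hL (hb.pos t ht) hc (hAb t ht))
  have := hb.one_le_frictionScale ht
  positivity

end DampingRate

section Energy

variable {H : Type*} [NormedAddCommGroup H]

/-- The energy `|v|² + L |y|²` of a mode of squared frequency `L` at position `y` with velocity
`v`. -/
def modeEnergy (L : ℝ) (y v : H) : ℝ := ‖v‖ ^ 2 + L * ‖y‖ ^ 2

theorem modeEnergy_nonneg {L : ℝ} (hL : 0 ≤ L) (y v : H) : 0 ≤ modeEnergy L y v := by
  unfold modeEnergy
  positivity

variable [InnerProductSpace ℝ H]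

/-- The energy with the cross term `κ ⟪v, y⟫` added; the Lyapunov functional is obtained for `κ` a
small multiple of `dampingRate`. -/
def perturbedEnergy (L κ : ℝ) (y v : H) : ℝ := modeEnergy L y v + κ * inner ℝ v y

theorem abs_mul_inner_le_half_modeEnergy {L κ : ℝ} (hκ : κ ^ 2 ≤ L) (y v : H) :
    |κ * inner ℝ v y| ≤ modeEnergy L y v / 2 :=
  calc |κ * inner ℝ v y| ≤ |κ| * (‖v‖ * ‖y‖) := by
        rw [abs_mul]
        gcongr
        exact abs_real_inner_le_norm v y
    _ = 2 * ‖v‖ * (|κ| * ‖y‖) / 2 := by ring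
    _ ≤ (‖v‖ ^ 2 + (|κ| * ‖y‖) ^ 2) / 2 := by
        gcongr
        exact two_mul_le_add_sq _ _
    _ ≤ modeEnergy L y v / 2 := by
        rw [mul_pow, sq_abs, modeEnergy]
        gcongr

theorem half_modeEnergy_le_perturbedEnergy {L κ : ℝ} (hκ : κ ^ 2 ≤ L) (y v : H) :
    modeEnergy L y v / 2 ≤ perturbedEnergy L κ y v := by
  rw [perturbedEnergy]
  linarith [(abs_le.1 (abs_mul_inner_le_half_modeEnergy hκ y v)).1]

theorem perturbedEnergy_le_modeEnergy {L κ : ℝ} (hκ : κ ^ 2 ≤ L) (y v : H) :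
    perturbedEnergy L κ y v ≤ 3 / 2 * modeEnergy L y v := by
  rw [perturbedEnergy]
  linarith [(abs_le.1 (abs_mul_inner_le_half_modeEnergy hκ y v)).2]

theorem hasDerivAt_perturbedEnergy {κ : ℝ → ℝ} {y v : ℝ → H} {L κ' m t : ℝ}
    (hκ : HasDerivAt κ κ' t) (hy : HasDerivAt y (v t) t)
    (hv : HasDerivAt v (-(L • y t) - m • v t) t) :
    HasDerivAt (fun τ => perturbedEnergy L (κ τ) (y τ) (v τ))
      (-(2 * m - κ t) * ‖v t‖ ^ 2 - κ t * L * ‖y t‖ ^ 2 - (κ t * m - κ') * inner ℝ (v t) (y t))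
      t := by
  refine (hv.norm_sq.add (hy.norm_sq.const_mul L)).add (hκ.mul (hv.inner ℝ hy)) |>.congr_deriv ?_
  simp only [inner_sub_left, inner_sub_right, inner_neg_left, inner_neg_right, real_inner_smul_left,
    real_inner_smul_right, real_inner_self_eq_norm_sq, real_inner_comm (v t) (y t)]
  ring

theorem neg_mul_inner_le {L k k' m a M ε : ℝ} (hk : 0 ≤ k) (hm : 0 ≤ m) (hL : 0 ≤ L)
    (hkmL : k * m ≤ (1 + M) * L) (hk' : |k'| ≤ a * (m * k)) (hε : 0 ≤ ε)
    (hεaM : ε * ((1 + a) ^ 2 * (1 + M)) ≤ 1) (y v : H) :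
    -((ε * k * m - ε * k') * inner ℝ v y) ≤ 1 / 2 * m * ‖v‖ ^ 2 + ε / 2 * k * L * ‖y‖ ^ 2 := by
  have hcoef : |k * m - k'| ≤ (1 + a) * (k * m) := by
    calc |k * m - k'| ≤ |k * m| + |k'| := abs_sub _ _
      _ ≤ k * m + a * (m * k) := by
          rw [abs_of_nonneg (mul_nonneg hk hm)]
          gcongr
      _ = (1 + a) * (k * m) := by ring
  have hinner : -((k * m - k') * inner ℝ v y) ≤ (1 + a) * (k * m) * (‖v‖ * ‖y‖) := by
    refine (neg_le_abs _).trans ?_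
    rw [abs_mul]
    exact mul_le_mul hcoef (abs_real_inner_le_norm v y) (abs_nonneg _) ((abs_nonneg _).trans hcoef)
  calc -((ε * k * m - ε * k') * inner ℝ v y) = ε * -((k * m - k') * inner ℝ v y) := by ring
    _ ≤ ε * ((1 + a) * (k * m) * (‖v‖ * ‖y‖)) := by gcongr
    _ = m / 2 * (2 * ‖v‖ * (ε * (1 + a) * k * ‖y‖)) := by ring
    _ ≤ m / 2 * (‖v‖ ^ 2 + (ε * (1 + a) * k * ‖y‖) ^ 2) := by
        gcongr
        exact two_mul_le_add_sq _ _
    _ = 1 / 2 * m * ‖v‖ ^ 2 + ε ^ 2 * (1 + a) ^ 2 / 2 * k * (k * m) * ‖y‖ ^ 2 := by ring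
    _ ≤ 1 / 2 * m * ‖v‖ ^ 2 + ε ^ 2 * (1 + a) ^ 2 / 2 * k * ((1 + M) * L) * ‖y‖ ^ 2 := by gcongr
    _ = 1 / 2 * m * ‖v‖ ^ 2 + ε * ((1 + a) ^ 2 * (1 + M)) * (ε / 2 * k * L * ‖y‖ ^ 2) := by ring
    _ ≤ 1 / 2 * m * ‖v‖ ^ 2 + ε / 2 * k * L * ‖y‖ ^ 2 := by
        gcongr _ + ?_
        exact mul_le_of_le_one_left (by positivity) hεaM

theorem perturbedEnergy_dissipation {L k k' m a M ε : ℝ} (hk : 0 ≤ k) (hkL : k ^ 2 ≤ L)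
    (hkm : k ≤ m) (hkmL : k * m ≤ (1 + M) * L) (hk' : |k'| ≤ a * (m * k)) (hε : 0 ≤ ε)
    (hε₁ : ε ≤ 1) (hεaM : ε * ((1 + a) ^ 2 * (1 + M)) ≤ 1) (y v : H) :
    -(2 * m - ε * k) * ‖v‖ ^ 2 - ε * k * L * ‖y‖ ^ 2 - (ε * k * m - ε * k') * inner ℝ v y ≤
      -(ε / 3 * k * perturbedEnergy L (ε * k) y v) := by
  have hcross := neg_mul_inner_le hk (hk.trans hkm) ((sq_nonneg k).trans hkL) hkmL hk' hε hεaM y v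
  have hεk : ε * k ≤ k := mul_le_of_le_one_left hk hε₁
  have hfriction : ε * k * ‖v‖ ^ 2 ≤ m * ‖v‖ ^ 2 := by
    gcongr
    exact hεk.trans hkm
  have hcompare : ε / 3 * k * perturbedEnergy L (ε * k) y v ≤
      ε / 3 * k * (3 / 2 * modeEnergy L y v) := by
    gcongr
    exact perturbedEnergy_le_modeEnergy ((pow_le_pow_left₀ (by positivity) hεk 2).trans hkL) y v
  rw [modeEnergy] at hcompare
  linarith

end Energy

section Mode

variable {H : Type*} [NormedAddCommGroup H] [InnerProductSpace ℝ H]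

/-- `y` with velocity `v` solves `y'' + L y + (b + g L) y' = 0` on `[0, ∞)`, the equation of a
single Fourier mode with `L = |ξ|²`. -/
structure IsViscoelasticMode (b g : ℝ → ℝ) (L : ℝ) (y v : ℝ → H) : Prop where
  hasDerivAt_position : ∀ t, 0 ≤ t → HasDerivAt y (v t) t
  hasDerivAt_velocity : ∀ t, 0 ≤ t → HasDerivAt v (-(L • y t) - (b t + g t * L) • v t) t

namespace IsViscoelasticMode

variable {b g : ℝ → ℝ}

theorem of_contDiff {L : ℝ} {y : ℝ → H} (hy : ContDiff ℝ 2 y)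
    (hode : ∀ t, 0 ≤ t → deriv (deriv y) t + L • y t + (b t + g t * L) • deriv y t = 0) :
    IsViscoelasticMode b g L y (deriv y) where
  hasDerivAt_position t _ := (hy.differentiable two_ne_zero t).hasDerivAt
  hasDerivAt_velocity t ht := by
    have hacc : deriv (deriv y) t = -(L • y t) - (b t + g t * L) • deriv y t := by
      rw [eq_sub_iff_add_eq, eq_neg_iff_add_eq_zero, add_right_comm, hode t ht]
    exact hacc ▸ (hy.differentiable_deriv_two t).hasDerivAt

theorem exists_lyapunov (hb : IsEffectiveFriction b) (hg : ∀ t, 0 ≤ t → 0 ≤ g t) {M : ℝ}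
    (hbg : ∀ t, 0 ≤ t → b t * g t ≤ M) :
    ∃ c, 0 < c ∧ ∀ (L : ℝ) (y v : ℝ → H), 0 ≤ L → IsViscoelasticMode b g L y v →
      ∃ F F' : ℝ → ℝ, (∀ t, 0 ≤ t → HasDerivAt F (F' t) t) ∧
        (∀ t, 0 ≤ t → F' t ≤ -(c * dampingRate L (b t) * F t)) ∧
        (∀ t, 0 ≤ t → modeEnergy L (y t) (v t) / 2 ≤ F t) ∧
        (∀ t, 0 ≤ t → F t ≤ 3 / 2 * modeEnergy L (y t) (v t)) := by
  obtain ⟨a, ha, hab⟩ := hb.exists_abs_deriv_le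
  have hM : 0 ≤ M := (mul_nonneg (hb.pos 0 le_rfl).le (hg 0 le_rfl)).trans (hbg 0 le_rfl)
  have haM : 1 ≤ (1 + a) ^ 2 * (1 + M) :=
    one_le_mul_of_one_le_of_one_le (one_le_pow₀ (by linarith)) (by linarith)
  set ε : ℝ := ((1 + a) ^ 2 * (1 + M))⁻¹
  have hε : 0 < ε := by positivity
  have hε₁ : ε ≤ 1 := inv_le_one_of_one_le₀ haM
  refine ⟨ε / 3, by positivity, fun L y v hL hmode => ?_⟩
  choose! k' hk_deriv hk_bound using fun t (ht : 0 ≤ t) =>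
    exists_hasDerivAt_dampingRate hL (hb.pos t ht) (hb.hasDerivAt t) (hab t ht)
  have hκ (t : ℝ) (ht : 0 ≤ t) : (ε * dampingRate L (b t)) ^ 2 ≤ L := by
    rw [mul_pow]
    exact (mul_le_of_le_one_left (sq_nonneg _) (pow_le_one₀ hε.le hε₁)).trans
      (dampingRate_sq_le_left hL (hb.pos t ht))
  refine ⟨fun t => perturbedEnergy L (ε * dampingRate L (b t)) (y t) (v t), _,
    fun t ht => hasDerivAt_perturbedEnergy ((hk_deriv t ht).const_mul ε)
      (hmode.hasDerivAt_position t ht) (hmode.hasDerivAt_velocity t ht), fun t ht => ?_,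
    fun t ht => half_modeEnergy_le_perturbedEnergy (hκ t ht) _ _,
    fun t ht => perturbedEnergy_le_modeEnergy (hκ t ht) _ _⟩
  have hbt := hb.pos t ht
  have hk := dampingRate_nonneg hL hbt.le
  have hbm : b t ≤ b t + g t * L := le_add_of_nonneg_right (mul_nonneg (hg t ht) hL)
  exact perturbedEnergy_dissipation hk (dampingRate_sq_le_left hL hbt)
    ((dampingRate_le_right hL hbt).trans hbm)
    (dampingRate_mul_add_le hL hbt (hg t ht) (hbg t ht))
    ((hk_bound t ht).trans (by gcongr)) hε.le hε₁
    (inv_mul_cancel₀ (zero_lt_one.trans_le haM).ne').le _ _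

theorem exists_rpow_mul_modeEnergy_le (hb : IsEffectiveFriction b) (hg : ∀ t, 0 ≤ t → 0 ≤ g t)
    {M : ℝ} (hbg : ∀ t, 0 ≤ t → b t * g t ≤ M) {s : ℝ} (hs : 0 ≤ s) :
    ∃ K, ∀ (L : ℝ) (y v : ℝ → H), 0 ≤ L → IsViscoelasticMode b g L y v → ∀ t, 0 ≤ t →
      (L * frictionScale b t) ^ s * modeEnergy L (y t) (v t) ≤
        K * ((1 + L) ^ s * modeEnergy L (y 0) (v 0)) := by
  obtain ⟨c, hc, hlyapunov⟩ := exists_lyapunov (H := H) hb hg hbg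
  obtain ⟨A, hA, hAb⟩ := hb.exists_div_sq_le (K := s / c) (by positivity)
  refine ⟨3 * (2 + s / c + A) ^ s, fun L y v hL hmode t ht => ?_⟩
  obtain ⟨F, F', hF, hF', hEF, hFE⟩ := hlyapunov L y v hL hmode
  have hE (t : ℝ) : 0 ≤ modeEnergy L (y t) (v t) := modeEnergy_nonneg hL _ _
  have hF₀ (t : ℝ) (ht : 0 ≤ t) : 0 ≤ F t := (div_nonneg (hE t) zero_le_two).trans (hEF t ht)
  have hanti := hb.antitoneOn_weight_rpow_mul hL hs hc hA hAb hF hF₀ hF'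
  have hB := zero_lt_one.trans_le (hb.one_le_frictionScale ht)
  calc (L * frictionScale b t) ^ s * modeEnergy L (y t) (v t)
      ≤ (1 + s / c + L * (A + frictionScale b t)) ^ s * (2 * F t) := by
        have : 0 ≤ s / c + L * A := by positivity
        gcongr
        · exact hE t
        · linarith
        · linarith [hEF t ht]
    _ = 2 * ((1 + s / c + L * (A + frictionScale b t)) ^ s * F t) := by ring
    _ ≤ 2 * ((1 + s / c + L * (A + frictionScale b 0)) ^ s * F 0) := by
        gcongr 2 * ?_
        exact hanti Set.self_mem_Ici ht ht
    _ = 2 * ((1 + s / c + L * (A + 1)) ^ s * F 0) := by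
        rw [frictionScale, intervalIntegral.integral_same, add_zero]
    _ ≤ 2 * (((2 + s / c + A) * (1 + L)) ^ s * (3 / 2 * modeEnergy L (y 0) (v 0))) := by
        have : 0 ≤ (1 + s / c) * L + (1 + A) := by positivity
        gcongr
        · exact hF₀ 0 le_rfl
        · linarith
        · exact hFE 0 le_rfl
    _ = 3 * (2 + s / c + A) ^ s * ((1 + L) ^ s * modeEnergy L (y 0) (v 0)) := by
        rw [Real.mul_rpow (by positivity) (by positivity)]
        ring

theorem eventually_rpow_mul_modeEnergy_le (hb : IsEffectiveFriction b)
    (hg : ∀ t, 0 ≤ t → 0 ≤ g t) {M : ℝ} (hbg : ∀ t, 0 ≤ t → b t * g t ≤ M) {s : ℝ} (hs : 0 ≤ s) :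
    ∀ᶠ C in atTop, ∀ (L : ℝ) (y v : ℝ → H), 0 ≤ L → IsViscoelasticMode b g L y v → ∀ t, 0 ≤ t →
      L ^ s * modeEnergy L (y t) (v t) ≤
        (C * frictionScale b t ^ (-((s + 1) / 2))) ^ 2 * ((1 + L) ^ (s + 1) * ‖y 0‖ ^ 2) +
          (C * frictionScale b t ^ (-(s / 2))) ^ 2 * ((1 + L) ^ s * ‖v 0‖ ^ 2) := by
  obtain ⟨K₀, hK₀⟩ := exists_rpow_mul_modeEnergy_le (H := H) hb hg hbg hs
  obtain ⟨K₁, hK₁⟩ := exists_rpow_mul_modeEnergy_le (H := H) hb hg hbg (s := s + 1) (by positivity)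
  have hsq : Tendsto (fun C : ℝ => C ^ 2) atTop atTop := tendsto_pow_atTop two_ne_zero
  filter_upwards [hsq.eventually_ge_atTop K₀, hsq.eventually_ge_atTop K₁]
    with C hC₀ hC₁ L y v hL hmode t ht
  have hB : 0 < frictionScale b t := zero_lt_one.trans_le (hb.one_le_frictionScale ht)
  have hE₀ : 0 ≤ modeEnergy L (y 0) (v 0) := modeEnergy_nonneg hL _ _
  have hZ := rpow_mul_le_of_mul_rpow_mul_le hL hB (by positivity) hC₀ (hK₀ L y v hL hmode t ht)
  have hLZ := rpow_mul_le_of_mul_rpow_mul_le hL hB (by positivity) hC₁ (hK₁ L y v hL hmode t ht)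
  rw [Real.rpow_add_one' hL (by positivity), mul_comm (L ^ s) L, mul_assoc] at hLZ
  rw [← mul_assoc, ← mul_assoc]
  exact le_mul_add_mul_of_le_of_mul_le hL (sq_nonneg _) (sq_nonneg _) (by positivity)
    (by positivity) (hZ.trans_eq (mul_assoc _ _ _).symm) (hLZ.trans_eq (mul_assoc _ _ _).symm)

end IsViscoelasticMode

end Mode

section Integrated

variable {X H : Type*} [MeasurableSpace X] {μ : Measure X} [NormedAddCommGroup H]
  [InnerProductSpace ℝ H] {ρ : X → ℝ} {b g : ℝ → ℝ}

theorem eventually_sqrt_integral_le (hρm : AEStronglyMeasurable ρ μ) (hρ : ∀ x, 0 ≤ ρ x)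
    (hb : IsEffectiveFriction b) (hg : ∀ t, 0 ≤ t → 0 ≤ g t) {M : ℝ}
    (hbg : ∀ t, 0 ≤ t → b t * g t ≤ M) {s : ℝ} (hs : 0 ≤ s) :
    ∀ᶠ C in atTop, ∀ u v : ℝ → X → H, (∀ t, 0 ≤ t → AEStronglyMeasurable (u t) μ) →
      (∀ x, IsViscoelasticMode b g (ρ x ^ 2) (fun t => u t x) (fun t => v t x)) → ∀ t, 0 ≤ t →
      Integrable (fun x => (1 + ρ x ^ 2) ^ (s + 1) * ‖u 0 x‖ ^ 2) μ →
      Integrable (fun x => (1 + ρ x ^ 2) ^ s * ‖v 0 x‖ ^ 2) μ →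
      (Integrable (fun x => ρ x ^ (2 * (s + 1)) * ‖u t x‖ ^ 2) μ ∧
        √(∫ x, ρ x ^ (2 * (s + 1)) * ‖u t x‖ ^ 2 ∂μ) ≤
          C * frictionScale b t ^ (-((s + 1) / 2)) *
              √(∫ x, (1 + ρ x ^ 2) ^ (s + 1) * ‖u 0 x‖ ^ 2 ∂μ) +
            C * frictionScale b t ^ (-(s / 2)) * √(∫ x, (1 + ρ x ^ 2) ^ s * ‖v 0 x‖ ^ 2 ∂μ)) ∧
      (Integrable (fun x => ρ x ^ (2 * s) * ‖v t x‖ ^ 2) μ ∧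
        √(∫ x, ρ x ^ (2 * s) * ‖v t x‖ ^ 2 ∂μ) ≤
          C * frictionScale b t ^ (-((s + 1) / 2)) *
              √(∫ x, (1 + ρ x ^ 2) ^ (s + 1) * ‖u 0 x‖ ^ 2 ∂μ) +
            C * frictionScale b t ^ (-(s / 2)) * √(∫ x, (1 + ρ x ^ 2) ^ s * ‖v 0 x‖ ^ 2 ∂μ)) := by
  filter_upwards [IsViscoelasticMode.eventually_rpow_mul_modeEnergy_le (H := H) hb hg hbg hs,
    eventually_ge_atTop 0] with C hpoint hC u v hum hmode t ht hu₀ hv₀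
  have hB : 0 < frictionScale b t := zero_lt_one.trans_le (hb.one_le_frictionScale ht)
  have hvm : AEStronglyMeasurable (v t) μ :=
    aestronglyMeasurable_of_hasDerivAt (fun τ hτ => hum τ (ht.trans hτ))
      fun x => (hmode x).hasDerivAt_position t ht
  have hρpow (x : X) (r : ℝ) : ρ x ^ (2 * r) = (ρ x ^ 2) ^ r := by
    rw [Real.rpow_mul (hρ x), Real.rpow_two]
  have hweight (r : ℝ) : AEStronglyMeasurable (fun x => ρ x ^ (2 * r)) μ :=
    (hρm.aemeasurable.pow_const _).aestronglyMeasurable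
  refine ⟨integrable_and_sqrt_integral_le (by positivity) (by positivity)
      ((hweight _).mul ((hum t ht).norm.pow 2)) (fun x => by have := hρ x; positivity) hu₀ hv₀
      fun x => le_trans ?_ (hpoint _ _ _ (sq_nonneg _) (hmode x) t ht),
    integrable_and_sqrt_integral_le (by positivity) (by positivity)
      ((hweight _).mul (hvm.norm.pow 2)) (fun x => by have := hρ x; positivity) hu₀ hv₀
      fun x => le_trans ?_ (hpoint _ _ _ (sq_nonneg _) (hmode x) t ht)⟩
  · rw [hρpow, Real.rpow_add_one' (sq_nonneg _) (by positivity), mul_assoc, modeEnergy]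
    gcongr
    exact le_add_of_nonneg_left (sq_nonneg _)
  · rw [hρpow, modeEnergy]
    gcongr
    exact le_add_of_nonneg_right (by positivity)

theorem effective_integrable_decaying_viscoelastic_decay_general (hρm : AEStronglyMeasurable ρ μ)
    (hρ : ∀ x, 0 ≤ ρ x) (hb : IsEffectiveFriction b) (hg : ∀ t, 0 ≤ t → 0 ≤ g t) {M : ℝ}
    (hbg : ∀ t, 0 ≤ t → b t * g t ≤ M) (σ : ℝ) :
    ∃ C, 0 < C ∧ ∀ u v : ℝ → X → H, (∀ t, 0 ≤ t → AEStronglyMeasurable (u t) μ) →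
      (∀ x, IsViscoelasticMode b g (ρ x ^ 2) (fun t => u t x) (fun t => v t x)) → ∀ t, 0 ≤ t →
      (1 ≤ σ →
        Integrable (fun x => (1 + ρ x ^ 2) ^ σ * ‖u 0 x‖ ^ 2) μ →
        Integrable (fun x => (1 + ρ x ^ 2) ^ (σ - 1) * ‖v 0 x‖ ^ 2) μ →
        Integrable (fun x => ρ x ^ (2 * σ) * ‖u t x‖ ^ 2) μ ∧
          √(∫ x, ρ x ^ (2 * σ) * ‖u t x‖ ^ 2 ∂μ) ≤
            C * frictionScale b t ^ (-(σ / 2)) * √(∫ x, (1 + ρ x ^ 2) ^ σ * ‖u 0 x‖ ^ 2 ∂μ) +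
              C * frictionScale b t ^ (-((σ - 1) / 2)) *
                √(∫ x, (1 + ρ x ^ 2) ^ (σ - 1) * ‖v 0 x‖ ^ 2 ∂μ)) ∧
      (0 ≤ σ →
        Integrable (fun x => (1 + ρ x ^ 2) ^ (σ + 1) * ‖u 0 x‖ ^ 2) μ →
        Integrable (fun x => (1 + ρ x ^ 2) ^ σ * ‖v 0 x‖ ^ 2) μ →
        Integrable (fun x => ρ x ^ (2 * σ) * ‖v t x‖ ^ 2) μ ∧
          √(∫ x, ρ x ^ (2 * σ) * ‖v t x‖ ^ 2 ∂μ) ≤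
            C * frictionScale b t ^ (-((σ + 1) / 2)) *
                √(∫ x, (1 + ρ x ^ 2) ^ (σ + 1) * ‖u 0 x‖ ^ 2 ∂μ) +
              C * frictionScale b t ^ (-(σ / 2)) *
                √(∫ x, (1 + ρ x ^ 2) ^ σ * ‖v 0 x‖ ^ 2 ∂μ)) := by
  have hdecay (s : ℝ) := eventually_imp_distrib_left.2 fun hs : 0 ≤ s =>
    eventually_sqrt_integral_le (H := H) hρm hρ hb hg hbg hs
  obtain ⟨C, ⟨hposition, hvelocity⟩, hC⟩ :=
    (((hdecay (σ - 1)).and (hdecay σ)).and (eventually_gt_atTop 0)).exists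
  rw [sub_add_cancel] at hposition
  exact ⟨C, hC, fun u v hum hmode t ht =>
    ⟨fun hσ hu₀ hv₀ => (hposition (sub_nonneg.2 hσ) u v hum hmode t ht hu₀ hv₀).1,
      fun hσ hu₀ hv₀ => (hvelocity hσ u v hum hmode t ht hu₀ hv₀).2⟩⟩

end Integrated

/-- Theorem 4.5 of the paper: effective friction together with an integrable and
decaying viscoelastic coefficient `g = g(t)`. -/
theorem effective_integrable_decaying_viscoelastic_decay
    (n : ℕ) (hn : 1 ≤ n)
    (b g : ℝ → ℝ)
    (hb_smooth : ContDiff ℝ 2 b)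
    (hb_pos : ∀ t : ℝ, 0 ≤ t → 0 < b t)
    (hb_sign : (∀ t : ℝ, 0 ≤ t → 0 ≤ deriv b t) ∨ (∀ t : ℝ, 0 ≤ t → deriv b t ≤ 0))
    (hb_eff : Tendsto (fun t => t * b t) atTop atTop)
    (Cb : ℝ) (hCb : 0 < Cb)
    (hb1 : ∀ t : ℝ, 0 ≤ t → |deriv b t| ≤ Cb * b t / (1 + t))
    (hb2 : ∀ t : ℝ, 0 ≤ t → |deriv (deriv b) t| ≤ Cb * b t / (1 + t) ^ 2)
    (a : ℝ) (ha : a < 1)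
    (hbEF : ∀ t : ℝ, 0 ≤ t → |deriv b t| ≤ a * (b t) ^ 2)
    (hg_smooth : ContDiff ℝ 1 g)
    (hg_pos : ∀ t : ℝ, 0 ≤ t → 0 < g t)
    (hg_deriv_neg : ∀ t : ℝ, 0 ≤ t → deriv g t < 0)
    (hg_int : IntegrableOn g (Set.Ici (0 : ℝ)))
    (hbg : ∀ t : ℝ, 0 ≤ t → b t * g t ≤ 1 / 2)
    (hbg' : ∀ t : ℝ, 0 ≤ t → deriv b t / b t ≤ -(deriv g t) / g t)
    (hg5 : IntegrableOn (fun t => (deriv g t) ^ 2 / g t) (Set.Ici (0 : ℝ))) :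
    ∃ t₀ : ℝ, 0 ≤ t₀ ∧
      ∀ σ : ℝ, ∃ C' : ℝ, 0 < C' ∧
        ∀ (uh : ℝ → EuclideanSpace ℝ (Fin n) → ℂ) (u₀ u₁ : EuclideanSpace ℝ (Fin n) → ℂ),
          Measurable (fun p : ℝ × EuclideanSpace ℝ (Fin n) => uh p.1 p.2) →
          (∀ ξ : EuclideanSpace ℝ (Fin n), ContDiff ℝ 2 (fun s => uh s ξ)) →
          (∀ (ξ : EuclideanSpace ℝ (Fin n)) (t : ℝ), 0 ≤ t →
            deriv (deriv (fun s => uh s ξ)) t + ((‖ξ‖ ^ 2 : ℝ) : ℂ) * uh t ξ +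
              ((b t + g t * ‖ξ‖ ^ 2 : ℝ) : ℂ) * deriv (fun s => uh s ξ) t = 0) →
          (∀ ξ : EuclideanSpace ℝ (Fin n), uh 0 ξ = u₀ ξ) →
          (∀ ξ : EuclideanSpace ℝ (Fin n), deriv (fun s => uh s ξ) 0 = u₁ ξ) →
          ∀ t : ℝ, t₀ ≤ t →
            Integrable (fun ξ : EuclideanSpace ℝ (Fin n) => (1 + ‖ξ‖ ^ 2) ^ (σ) * ‖u₀ ξ‖ ^ 2) →
            Integrable (fun ξ : EuclideanSpace ℝ (Fin n) => (1 + ‖ξ‖ ^ 2) ^ (σ - 1) * ‖u₁ ξ‖ ^ 2) →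
            Integrable (fun ξ : EuclideanSpace ℝ (Fin n) => (1 + ‖ξ‖ ^ 2) ^ (σ + 1) * ‖u₀ ξ‖ ^ 2) →
            Integrable (fun ξ : EuclideanSpace ℝ (Fin n) => (1 + ‖ξ‖ ^ 2) ^ (σ) * ‖u₁ ξ‖ ^ 2) →
            ((1 ≤ σ →
              Real.sqrt (∫ ξ : EuclideanSpace ℝ (Fin n), ‖ξ‖ ^ (2 * σ) * ‖uh t ξ‖ ^ 2) ≤
                C' * (1 + ∫ τ in t₀..t, (b τ)⁻¹) ^ (-(σ / 2)) * Real.sqrt (∫ ξ : EuclideanSpace ℝ (Fin n), (1 + ‖ξ‖ ^ 2) ^ (σ) * ‖u₀ ξ‖ ^ 2) +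
                  C' * (1 + ∫ τ in t₀..t, (b τ)⁻¹) ^ (-((σ - 1) / 2)) * Real.sqrt (∫ ξ : EuclideanSpace ℝ (Fin n), (1 + ‖ξ‖ ^ 2) ^ (σ - 1) * ‖u₁ ξ‖ ^ 2)) ∧
            (0 ≤ σ →
              Real.sqrt (∫ ξ : EuclideanSpace ℝ (Fin n), ‖ξ‖ ^ (2 * σ) * ‖deriv (fun s => uh s ξ) t‖ ^ 2) ≤
                C' * (1 + ∫ τ in t₀..t, (b τ)⁻¹) ^ (-((σ + 1) / 2)) * Real.sqrt (∫ ξ : EuclideanSpace ℝ (Fin n), (1 + ‖ξ‖ ^ 2) ^ (σ + 1) * ‖u₀ ξ‖ ^ 2) +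
                  C' * (1 + ∫ τ in t₀..t, (b τ)⁻¹) ^ (-(σ / 2)) * Real.sqrt (∫ ξ : EuclideanSpace ℝ (Fin n), (1 + ‖ξ‖ ^ 2) ^ (σ) * ‖u₁ ξ‖ ^ 2))) := by
  have hb := IsEffectiveFriction.of_tendsto_mul_atTop (hb_smooth.of_le one_le_two) hb_pos hb_eff
    hb1
  refine ⟨0, le_rfl, fun σ => ?_⟩
  obtain ⟨C, hC, hdecay⟩ := effective_integrable_decaying_viscoelastic_decay_general (μ := volume)
    (H := ℂ) continuous_norm.aestronglyMeasurable
    (fun ξ : EuclideanSpace ℝ (Fin n) => norm_nonneg ξ) hb (fun t ht => (hg_pos t ht).le) hbg σ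
  refine ⟨C, hC, fun uh u₀ u₁ hmeas hsmooth hode hu₀ hu₁ t ht hi₁ hi₂ hi₃ hi₄ => ?_⟩
  obtain rfl : uh 0 = u₀ := funext hu₀
  obtain rfl : (fun ξ => deriv (fun s => uh s ξ) 0) = u₁ := funext hu₁
  have hest := hdecay uh (fun t ξ => deriv (fun s => uh s ξ) t)
    (fun s _ => (hmeas.comp measurable_prodMk_left).aestronglyMeasurable)
    (fun ξ => .of_contDiff (hsmooth ξ) fun s hs => by
      simpa only [Complex.real_smul] using hode ξ s hs) t ht
  exact ⟨fun hσ => (hest.1 hσ hi₁ hi₂).2, fun hσ => (hest.2 hσ hi₃ hi₄).2⟩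
end
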